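/- arXiv:1310.5519 — 5 statements merged into one kernel-verified Lean document; each statement's English description precedes it below -/
import Mathlib

section
/- For every positive integer n, every set R, and every mapping c from the n-element subsets of ω to R, there exist an infinite subset X of ω and a subset I of {0,1,...,n-1} such that for all n-element subsets A, B of X one has c(A) = c(B) if and only if A:I = B:I. -/
/-!
The argument is Rado's. Passing to an infinite set on which the `2n`-subset colouring "which pairs
of `n`-subsets of this `2n`-set have equal `c`-colours" is constant (Ramsey's theorem,
`exists_monochromatic`), one may assume that whether `c a = c b` depends only on the relative order
of the tuples `a` and `b` (`OrderInvariant`). Tuples are represented by strictly increasing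
sequences `ℕ → ℕ` of which only the first `n` terms matter.

Call a coordinate `k` *essential* if changing coordinate `k` alone can change the colour. By order
invariance, changing an essential coordinate alone always changes the colour
(`not_essential_of_eq`). Let `I` be the set of essential coordinates.

* If `a` and `b` agree on `I`, both can be moved to `max a b` by raising one inessential
  coordinate at a time, from the last to the first, so they have the same colour.
* If `a` and `b` have the same colour but disagree on `I`, let `i ∈ I` be least with `a i ≠ b i`,
  say `a i < b i`. If `a i` occurs as `b j`, then `j ∉ I`, so `b j` can be moved off `a i` without
  changing the colour of `b`. Now `a i` can be moved slightly without altering the relative order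
  of the pair, hence without changing the colour of `a`, contradicting that `i` is essential.
-/

namespace ErdosRado

/-! ### Ramsey's theorem -/

/-- The step from `m`-tuples to `(m+1)`-tuples: along a suitable sequence `x`, the colour of an
`(m+1)`-tuple does not depend on its last entry. The colour `χ' s` is the limit of
`χ (Fin.snoc s y)` as `y` tends to infinity along a nonprincipal ultrafilter. -/
lemma exists_end_homogeneous {κ : Type*} [Finite κ] (m : ℕ) (χ : (Fin (m + 1) → ℕ) → κ) :
    ∃ x : ℕ → ℕ, StrictMono x ∧ ∃ χ' : (Fin m → ℕ) → κ,
      ∀ u : Fin (m + 1) → ℕ, StrictMono u → χ (x ∘ u) = χ' (x ∘ Fin.init u) := by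
  have hlim : ∀ s : Fin m → ℕ, ∃ k : κ,
      ∀ᶠ y in (Filter.hyperfilter ℕ : Filter ℕ), χ (Fin.snoc s y : Fin (m + 1) → ℕ) = k := by
    intro s
    obtain ⟨k, hk⟩ := Ultrafilter.eq_pure_of_finite
      ((Filter.hyperfilter ℕ).map fun y => χ (Fin.snoc s y : Fin (m + 1) → ℕ))
    refine ⟨k, ?_⟩
    have h : ({k} : Set κ) ∈
        (Filter.hyperfilter ℕ).map fun y => χ (Fin.snoc s y : Fin (m + 1) → ℕ) := by
      rw [hk]; simp
    exact h
  choose χ' hχ' using hlim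
  have hnext : ∀ N : ℕ, ∃ y, N < y ∧ ∀ s : Fin m → Fin (N + 1),
      χ (Fin.snoc (fun i => (s i : ℕ)) y : Fin (m + 1) → ℕ) = χ' (fun i => (s i : ℕ)) := by
    intro N
    have h1 : ∀ᶠ y in (Filter.hyperfilter ℕ : Filter ℕ), N < y := by
      exact Filter.hyperfilter_le_cofinite (by
        rw [Nat.cofinite_eq_atTop]; exact Filter.eventually_gt_atTop N)
    have h2 : ∀ᶠ y in (Filter.hyperfilter ℕ : Filter ℕ), ∀ s : Fin m → Fin (N + 1),
        χ (Fin.snoc (fun i => (s i : ℕ)) y : Fin (m + 1) → ℕ) = χ' (fun i => (s i : ℕ)) :=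
      Filter.eventually_all.2 fun s => hχ' _
    exact (h1.and h2).exists
  choose next hlt hnext using hnext
  let z : ℕ → ℕ := fun k => next^[k] 0
  have hz : ∀ k, z (k + 1) = next (z k) := fun k => Function.iterate_succ_apply' _ _ _
  have hzmono : StrictMono z := strictMono_nat_of_lt_succ fun k => by rw [hz]; exact hlt _
  refine ⟨fun k => z (k + 1), fun a b hab => hzmono (by omega), χ', fun u hu => ?_⟩
  have hle : ∀ i : Fin m, z (u i.castSucc + 1) < z (u (Fin.last m)) + 1 := fun i =>
    Nat.lt_succ_of_le (hzmono.monotone (hu (Fin.castSucc_lt_last i)))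
  have h := hnext (z (u (Fin.last m))) fun i => ⟨z (u i.castSucc + 1), hle i⟩
  rw [← hz] at h
  convert h using 2
  · funext i
    refine Fin.lastCases ?_ (fun i => ?_) i <;> simp
  · rfl

/-- Ramsey's theorem for `m`-tuples and finitely many colours. -/
lemma exists_monochromatic {κ : Type*} [Finite κ] (m : ℕ) (χ : (Fin m → ℕ) → κ) :
    ∃ x : ℕ → ℕ, StrictMono x ∧ ∃ k : κ, ∀ u : Fin m → ℕ, StrictMono u → χ (x ∘ u) = k := by
  induction m with
  | zero => exact ⟨id, strictMono_id, χ Fin.elim0, fun u _ => congrArg χ (Subsingleton.elim _ _)⟩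
  | succ m ih =>
    obtain ⟨x, hx, χ', h⟩ := exists_end_homogeneous m χ
    obtain ⟨y, hy, k, hk⟩ := ih fun s => χ' (x ∘ s)
    refine ⟨x ∘ y, hx.comp hy, k, fun u hu => ?_⟩
    have h1 := h (y ∘ u) (hy.comp hu)
    have h2 := hk (Fin.init u) fun a b hab => hu (Fin.castSucc_lt_castSucc_iff.2 hab)
    rw [Function.comp_assoc, h1, ← h2]
    rfl

/-! ### Order-invariant colourings -/

/-- The colouring `D` of sequences only sees the first `n` terms, and whether two sequences have
the same colour is unaffected by applying a strictly increasing map to both. -/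
structure OrderInvariant {R : Type*} (n : ℕ) (D : (ℕ → ℕ) → R) : Prop where
  congr : ∀ a b : ℕ → ℕ, (∀ k < n, a k = b k) → D a = D b
  comp : ∀ a b e : ℕ → ℕ, StrictMono e → (D a = D b ↔ D (e ∘ a) = D (e ∘ b))

/-- Every colouring of `n`-tuples becomes order-invariant on a suitable infinite set. -/
lemma exists_orderInvariant {R : Type*} (n : ℕ) (C : (Fin n → ℕ) → R) :
    ∃ x : ℕ → ℕ, StrictMono x ∧
      OrderInvariant n fun a : ℕ → ℕ => C fun i => x (a i) := by
  obtain ⟨x, hx, k, hk⟩ := exists_monochromatic (2 * n)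
    fun (u : Fin (2 * n) → ℕ) (p q : Fin n → Fin (2 * n)) => C (u ∘ p) = C (u ∘ q)
  refine ⟨x, hx, ⟨fun a b h => ?_, fun a b e he => ?_⟩⟩
  · exact congrArg C (funext fun i => congrArg x (h i i.2))
  · let S : Finset ℕ := (Finset.range n).image a ∪ (Finset.range n).image b
    have hS : S.card ≤ 2 * n := by
      have h1 := Finset.card_union_le ((Finset.range n).image a) ((Finset.range n).image b)
      have h2 := Finset.card_image_le (s := Finset.range n) (f := a)
      have h3 := Finset.card_image_le (s := Finset.range n) (f := b)
      simp only [Finset.card_range] at h2 h3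
      change S.card ≤ _ at h1
      omega
    obtain ⟨T, hST, hT⟩ := Infinite.exists_superset_card_eq S (2 * n) hS
    let U := T.orderEmbOfFin hT
    have hU : ∀ y ∈ T, ∃ j, U j = y := fun y hy => by
      have : y ∈ Set.range U := by rw [Finset.range_orderEmbOfFin]; exact hy
      exact this
    have ha : ∀ i : Fin n, ∃ j, U j = a i := fun i =>
      hU _ (hST (Finset.mem_union_left _ (Finset.mem_image_of_mem _ (Finset.mem_range.2 i.2))))
    have hb : ∀ i : Fin n, ∃ j, U j = b i := fun i =>
      hU _ (hST (Finset.mem_union_right _ (Finset.mem_image_of_mem _ (Finset.mem_range.2 i.2))))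
    choose p hp using ha
    choose q hq using hb
    have h1 := congrFun (congrFun (hk U U.strictMono) p) q
    have h2 := congrFun (congrFun (hk (e ∘ U) (he.comp U.strictMono)) p) q
    have h := h1.trans h2.symm
    simp only [Function.comp_def, hp, hq] at h
    exact Iff.of_eq h

/-! ### Essential coordinates -/

/-- Coordinate `k` is essential for `D` if changing it alone can change the colour. -/
def Essential {R : Type*} (D : (ℕ → ℕ) → R) (k : ℕ) : Prop :=
  ∃ a b : ℕ → ℕ, StrictMono a ∧ StrictMono b ∧ (∀ j, j ≠ k → a j = b j) ∧ D a ≠ D b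

variable {R : Type*} {n : ℕ} {D : (ℕ → ℕ) → R}

/-- All pairs of sequences differing exactly at coordinate `k` have the same relative order, so
their colours are either always equal or always distinct. -/
lemma OrderInvariant.eq_iff (hD : OrderInvariant n D) (k : ℕ) {a b : ℕ → ℕ}
    (ha : StrictMono a) (hb : StrictMono b) (hab : ∀ j, j ≠ k → a j = b j) (hk : a k < b k) :
    D a = D b ↔
      D (fun j => if j ≤ k then j else j + 1) = D (fun j => if j < k then j else j + 1) := by
  -- `U` enumerates the union of the ranges of `a` and `b`.
  let U : ℕ → ℕ := fun j => if j ≤ k then a j else b (j - 1)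
  have hU : StrictMono U := by
    refine strictMono_nat_of_lt_succ fun j => ?_
    rcases lt_trichotomy j k with h | h | h
    · simp only [U, if_pos h.le, if_pos (Nat.succ_le_of_lt h)]
      exact ha (Nat.lt_succ_self j)
    · subst h
      simpa [U] using hk
    · simp only [U, if_neg (not_le.2 h), if_neg (show ¬ j + 1 ≤ k by omega)]
      exact hb (by omega)
  have h1 : U ∘ (fun j => if j ≤ k then j else j + 1) = a := by
    funext j
    by_cases h : j ≤ k
    · simp [U, h]
    · simp [U, h, show ¬ j + 1 ≤ k by omega, hab j (by omega)]
  have h2 : U ∘ (fun j => if j < k then j else j + 1) = b := by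
    funext j
    by_cases h : j < k
    · simp [U, h, h.le, hab j h.ne]
    · simp [U, h, show ¬ j + 1 ≤ k by omega]
  have h := hD.comp (fun j => if j ≤ k then j else j + 1) (fun j => if j < k then j else j + 1) U hU
  rw [h1, h2] at h
  exact h.symm

lemma OrderInvariant.not_essential_of_eq (hD : OrderInvariant n D) {k : ℕ} {g h : ℕ → ℕ}
    (hg : StrictMono g) (hh : StrictMono h) (hgh : ∀ j, j ≠ k → g j = h j) (hk : g k < h k)
    (heq : D g = D h) : ¬ Essential D k := by
  rintro ⟨a, b, ha, hb, hab, hne⟩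
  have h0 := (hD.eq_iff k hg hh hgh hk).1 heq
  rcases lt_trichotomy (a k) (b k) with hlt | he | hlt
  · exact hne ((hD.eq_iff k ha hb hab hlt).2 h0)
  · exact hne (congrArg D (funext fun j => by
      by_cases hj : j = k
      · rw [hj, he]
      · exact hab j hj))
  · exact hne ((hD.eq_iff k hb ha (fun j hj => (hab j hj).symm) hlt).2 h0).symm

/-- Raising inessential coordinates does not change the colour. -/
lemma OrderInvariant.eq_of_le (hD : OrderInvariant n D) {a m : ℕ → ℕ}
    (ha : StrictMono a) (hm : StrictMono m) (hle : ∀ k, a k ≤ m k)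
    (h : ∀ k < n, Essential D k → a k = m k) : D a = D m := by
  -- The terms from position `k` on have already been raised in `g k`.
  let g : ℕ → ℕ → ℕ := fun k j => if j < k then a j else m j
  have hg : ∀ k, StrictMono (g k) := by
    intro k i j hij
    have := ha hij
    have := hm hij
    have := hle j
    simp only [g]
    split_ifs <;> omega
  have hstep : ∀ k < n, D (g (k + 1)) = D (g k) := by
    intro k hk
    have hoff : ∀ j, j ≠ k → g (k + 1) j = g k j := by
      intro j hj
      have : j < k + 1 ↔ j < k := by omega
      simp only [g, this]
    by_cases he : Essential D k
    · refine congrArg D (funext fun j => ?_)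
      by_cases hj : j = k
      · subst hj; simp [g, h j hk he]
      · exact hoff j hj
    · by_contra hne
      exact he ⟨_, _, hg _, hg _, hoff, hne⟩
  have hall : ∀ k ≤ n, D (g k) = D (g 0) := by
    intro k
    induction k with
    | zero => intro _; rfl
    | succ k ih => intro hk; rw [hstep k hk, ih (by omega)]
  calc D a = D (g n) := hD.congr _ _ fun k hk => by simp [g, hk]
    _ = D (g 0) := hall n le_rfl
    _ = D m := congrArg D (funext fun j => by simp [g])

lemma OrderInvariant.eq_of_agree (hD : OrderInvariant n D) {a b : ℕ → ℕ}
    (ha : StrictMono a) (hb : StrictMono b)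
    (h : ∀ k < n, Essential D k → a k = b k) : D a = D b := by
  have hm : StrictMono fun k => max (a k) (b k) := fun i j hij =>
    max_lt_max (ha hij) (hb hij)
  rw [hD.eq_of_le ha hm (fun k => le_max_left _ _) fun k hk he => by simp [h k hk he],
    hD.eq_of_le hb hm (fun k => le_max_right _ _) fun k hk he => by simp [h k hk he]]

/-- At the first essential coordinate where `a` and `b` differ, `a` is not smaller than `b`
provided the colours agree. -/
lemma OrderInvariant.not_lt_of_eq (hD : OrderInvariant n D) {a b : ℕ → ℕ}
    (ha : StrictMono a) (hb : StrictMono b) (heq : D a = D b) {i : ℕ}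
    (hi : Essential D i) (hmin : ∀ k < i, Essential D k → a k = b k) : ¬ a i < b i := by
  intro hlt
  -- After stretching by `v ↦ 2 * v + 1`, an occurrence of `a i` in `b` is moved one step down.
  let α : ℕ → ℕ := fun k => 2 * a k + 1
  let β₀ : ℕ → ℕ := fun k => 2 * b k + 1
  let β : ℕ → ℕ := fun k => if b k = a i then 2 * b k else 2 * b k + 1
  have hαβ₀ : D α = D β₀ :=
    (hD.comp a b (fun v => 2 * v + 1) fun u v (huv : u < v) => by
      change 2 * u + 1 < 2 * v + 1; omega).1 heq
  have hβ₀ : StrictMono β₀ := fun k l hkl => by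
    have := hb hkl
    simp only [β₀]; omega
  have hβ : StrictMono β := fun k l hkl => by
    have := hb hkl
    simp only [β]; split_ifs <;> omega
  have hββ₀ : D β₀ = D β := by
    refine hD.eq_of_agree hβ₀ hβ fun k _ hk => ?_
    have hne : b k ≠ a i := by
      rcases lt_trichotomy k i with h | h | h
      · rw [← hmin k h hk]; exact (ha h).ne
      · subst h; exact hlt.ne'
      · exact (hlt.trans (hb h)).ne'
    simp [β₀, β, hne]
  have hαβ : D α = D β := hαβ₀.trans hββ₀
  -- `e₁` and `e₂` differ only at the value `α i`, which `β` omits.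
  let e₁ : ℕ → ℕ := fun v => 2 * v
  let e₂ : ℕ → ℕ := fun v => if v = 2 * a i + 1 then 2 * v + 1 else 2 * v
  have he₁ : StrictMono e₁ := fun u v huv => by simp only [e₁]; omega
  have he₂ : StrictMono e₂ := fun u v huv => by simp only [e₂]; split_ifs <;> omega
  have hβe : e₁ ∘ β = e₂ ∘ β := by
    funext k
    have : β k ≠ 2 * a i + 1 := by simp only [β]; split_ifs <;> omega
    simp [e₁, e₂, this]
  have hα : StrictMono α := fun k l hkl => by
    have := ha hkl
    simp only [α]; omega
  have h12 : D (e₁ ∘ α) = D (e₂ ∘ α) := by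
    rw [(hD.comp α β e₁ he₁).1 hαβ, (hD.comp α β e₂ he₂).1 hαβ, hβe]
  refine hD.not_essential_of_eq (he₁.comp hα) (he₂.comp hα) (fun j hj => ?_) ?_ h12 hi
  · have : a j ≠ a i := fun h => hj (ha.injective h)
    simp [e₁, e₂, α, this]
  · simp [e₁, e₂, α]

/-- The canonical form of an order-invariant colouring. -/
lemma OrderInvariant.eq_iff_agree (hD : OrderInvariant n D) {a b : ℕ → ℕ}
    (ha : StrictMono a) (hb : StrictMono b) :
    D a = D b ↔ ∀ k < n, Essential D k → a k = b k := by
  refine ⟨fun heq k => ?_, hD.eq_of_agree ha hb⟩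
  induction k using Nat.strong_induction_on with
  | _ i ih =>
    intro hin hi
    have hmin : ∀ k < i, Essential D k → a k = b k := fun k hk => ih k hk (hk.trans hin)
    exact le_antisymm
      (not_lt.1 (hD.not_lt_of_eq hb ha heq.symm hi fun k hk he => (hmin k hk he).symm))
      (not_lt.1 (hD.not_lt_of_eq ha hb heq hi hmin))

/-! ### From sequences to finite sets -/

lemma exists_strictMono_extension (f : Fin n → ℕ) (hf : StrictMono f) :
    ∃ g : ℕ → ℕ, StrictMono g ∧ ∀ i : Fin n, g i = f i := by
  refine ⟨fun k => if h : k < n then f ⟨k, h⟩ else Finset.univ.sup f + 1 + k, ?_, ?_⟩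
  · intro i j hij
    by_cases hj : j < n
    · simp only [hj, hij.trans hj, dif_pos]
      exact hf hij
    · by_cases hi : i < n
      · have := Finset.le_sup (f := f) (Finset.mem_univ ⟨i, hi⟩)
        simp only [hi, hj, dif_pos, dif_neg, not_false_eq_true]
        omega
      · simp only [hi, hj, dif_neg, not_false_eq_true]
        omega
  · intro i
    simp

/-- Strictly increasing tuples are determined on a set of positions by the set of their values
there. -/
lemma image_eq_image_iff (I : Finset (Fin n)) {f g : Fin n → ℕ}
    (hf : StrictMono f) (hg : StrictMono g) :
    I.image f = I.image g ↔ ∀ i ∈ I, f i = g i := by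
  refine ⟨fun h i => ?_, fun h => Finset.image_congr h⟩
  induction i using WellFoundedLT.induction with
  | _ i ih =>
    intro hi
    rcases lt_trichotomy (f i) (g i) with hlt | heq | hlt
    · obtain ⟨j, hj, hji⟩ := Finset.mem_image.1 (h ▸ Finset.mem_image_of_mem f hi)
      have hlt' : j < i := hg.lt_iff_lt.1 (hji ▸ hlt)
      exact absurd (hf.injective ((ih j hlt' hj).trans hji)) hlt'.ne
    · exact heq
    · obtain ⟨j, hj, hji⟩ := Finset.mem_image.1 (h.symm ▸ Finset.mem_image_of_mem g hi)
      have hlt' : j < i := hf.lt_iff_lt.1 (hji ▸ hlt)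
      exact absurd (hg.injective ((ih j hlt' hj).symm.trans hji)) hlt'.ne

/-- An `n`-subset of the range of `x` is `x` applied to the first `n` terms of a strictly
increasing sequence. -/
lemma exists_sequence {x : ℕ → ℕ} (hx : StrictMono x) {A : Finset ℕ} (hA : A.card = n)
    (hAx : (A : Set ℕ) ⊆ Set.range x) :
    ∃ a : ℕ → ℕ, StrictMono a ∧ ∀ i : Fin n, x (a i) = (A.orderIsoOfFin hA i : ℕ) := by
  choose f hf using fun i : Fin n => hAx (A.orderIsoOfFin hA i).2
  have hmono : StrictMono f := fun i j hij => by
    rw [← hx.lt_iff_lt, hf, hf]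
    exact (A.orderIsoOfFin hA).strictMono hij
  obtain ⟨a, ha, haf⟩ := exists_strictMono_extension f hmono
  exact ⟨a, ha, fun i => by rw [haf, hf]⟩

lemma image_orderIsoOfFin {A : Finset ℕ} (hA : A.card = n) :
    Finset.univ.image (fun i => ((A.orderIsoOfFin hA) i : ℕ)) = A := by
  apply Finset.coe_injective
  rw [Finset.coe_image, Finset.coe_univ, Set.image_univ]
  exact Finset.range_orderEmbOfFin A hA

end ErdosRado

open ErdosRado in
/-- **Erdős–Rado canonical Ramsey theorem.** For every positive integer `n`, every set `R`
and every map `c` on the `n`-element subsets of `ω`, there are an infinite `X ⊆ ω` and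
`I ⊆ {0,…,n-1}` such that for `n`-element subsets `A, B` of `X` (enumerated increasingly),
`c A = c B` iff `A:I = B:I`, where `A:I = {x_i : i ∈ I}`. -/
theorem erdos_rado_canonical (n : ℕ) (hn : 0 < n) (R : Type*) (c : Finset ℕ → R) :
    ∃ X : Set ℕ, X.Infinite ∧ ∃ I : Finset (Fin n),
      ∀ (A B : Finset ℕ) (hA : A.card = n) (hB : B.card = n),
        ↑A ⊆ X → ↑B ⊆ X →
        (c A = c B ↔
          I.image (fun i => ((A.orderIsoOfFin hA) i : ℕ)) =
          I.image (fun i => ((B.orderIsoOfFin hB) i : ℕ))) := by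
  classical
  obtain ⟨x, hx, hD⟩ := exists_orderInvariant n fun f : Fin n → ℕ => c (Finset.univ.image f)
  refine ⟨Set.range x, Set.infinite_range_of_injective hx.injective,
    Finset.univ.filter fun i : Fin n =>
      Essential (fun a : ℕ → ℕ => c (Finset.univ.image fun i : Fin n => x (a i))) i, ?_⟩
  intro A B hA hB hAX hBX
  obtain ⟨a, ha, hxa⟩ := exists_sequence hx hA hAX
  obtain ⟨b, hb, hxb⟩ := exists_sequence hx hB hBX
  have key := hD.eq_iff_agree ha hb
  simp only [hxa, hxb, image_orderIsoOfFin] at key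
  rw [key, image_eq_image_iff _ (fun i j h => (A.orderIsoOfFin hA).strictMono h)
    (fun i j h => (B.orderIsoOfFin hB).strictMono h)]
  simp only [Finset.mem_filter, Finset.mem_univ, true_and, ← hxa, ← hxb, hx.injective.eq_iff]
  exact ⟨fun h i => h i i.2, fun h k hk => h ⟨k, hk⟩⟩
end

section
/- There exists a coloring c : [2^ω]^2 → {0,1} such that for every uncountable subset Y of 2^ω, the restriction of c to [2^ω]^2-pairs of elements of Y is not constant. -/
/-!
Fix a well-ordering `r` of `2^ω` and colour a pair `x <_lex y` according to whether `r x y`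
holds. A monochromatic set `Y` is one on which `r` agrees with the lexicographic order or with
its reverse, so it suffices that such a set is countable (`countable_of_dirLex_imp`). On it every
non-maximal `x` has an immediate successor `s x` (the `r`-least larger element), and `x` is
determined by the finite word `x ∩ s x`: if `x` and `x'` give the same word then `x` precedes
`s x'` and `x'` precedes `s x`, so neither of `x`, `x'` can come before the other.
-/

open Set

/-- The Cantor space `2^ω`. -/
abbrev Cantor : Type := ℕ → Bool

/-- The first coordinate where `x` and `y` differ (`0` if `x = y`). -/
noncomputable def splitLevel (x y : Cantor) : ℕ :=
  letI := Classical.dec (x = y)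
  if h : x = y then 0 else Nat.find (Function.ne_iff.mp h)

/-- The metric `d(x,y) = 1/(k+1)`, `k = min{m : x m ≠ y m}`. -/
noncomputable def cdist (x y : Cantor) : ℝ := 1 / (splitLevel x y + 1)

/-- The lexicographic order on `2^ω` induced by `0 < 1`. -/
def clex (x y : Cantor) : Prop := x ≠ y ∧ x (splitLevel x y) = false

/-- The initial segment `x ↾ k` as an element of `2^{<ω}`. -/
def restr (x : Cantor) (k : ℕ) : List Bool := (List.range k).map x

/-- The longest common initial segment `x ∩ y`. -/
noncomputable def meet (x y : Cantor) : List Bool := restr x (splitLevel x y)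

/-- A perfect subset of `2^ω`: nonempty, closed, with no isolated points. -/
def PerfectSet (P : Set Cantor) : Prop := Perfect P ∧ P.Nonempty

/-- A skew subset of `2^ω`. -/
def Skew (P : Set Cantor) : Prop :=
  ∀ x₀ ∈ P, ∀ x₁ ∈ P, ∀ y₀ ∈ P, ∀ y₁ ∈ P, x₀ ≠ x₁ → y₀ ≠ y₁ →
    cdist x₀ x₁ = cdist y₀ y₁ → meet x₀ x₁ = meet y₀ y₁

/-- Index `i - 1` of the `i`-th gap (for `i ∈ {1,…,n-1}`, reindexed by `Fin (n-1)`). -/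
def gapIdx {n : ℕ} (i : Fin (n - 1)) : Fin n := ⟨i.1, by have := i.2; omega⟩

/-- Index `i` of the `i`-th gap. -/
def gapIdx' {n : ℕ} (i : Fin (n - 1)) : Fin n := ⟨i.1 + 1, by have := i.2; omega⟩

/-- `|x_{i-1} ∩ x_i|` for the `i`-th gap of the tuple `X`. -/
noncomputable def gapLen {n : ℕ} (X : Fin n → Cantor) (i : Fin (n - 1)) : ℕ :=
  splitLevel (X (gapIdx i)) (X (gapIdx' i))

/-- `x_{i-1} ∩ x_i` for the `i`-th gap of the tuple `X`. -/
noncomputable def gapMeet {n : ℕ} (X : Fin n → Cantor) (i : Fin (n - 1)) : List Bool :=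
  meet (X (gapIdx i)) (X (gapIdx' i))

/-- `[T]^n` : lexicographically increasing `n`-tuples of elements of `T`. -/
def Tuples (n : ℕ) (T : Set Cantor) : Set (Fin n → Cantor) :=
  {X | (∀ i, X i ∈ T) ∧ ∀ i j : Fin n, i < j → clex (X i) (X j)}

/-- `[T]^n_⪯` : members of `[T]^n` whose gap distances realize the total order `⪯`
(on `{1,…,n-1}`, reindexed by `Fin (n-1)`):
`d(x_{i-1},x_i) > d(x_{j-1},x_j)` iff `i ⪯ j`, for `i ≠ j`. -/
def OrdTuples (n : ℕ) (prec : Fin (n - 1) → Fin (n - 1) → Prop) (T : Set Cantor) :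
    Set (Fin n → Cantor) :=
  {X | X ∈ Tuples n T ∧ ∀ i j : Fin (n - 1), i ≠ j →
      (cdist (X (gapIdx i)) (X (gapIdx' i)) > cdist (X (gapIdx j)) (X (gapIdx' j)) ↔ prec i j)}

/-- `D(X) = {x_{i-1} ∩ x_i : i ∈ {1,…,n-1}}`. -/
def Dset (n : ℕ) (X : Fin n → Cantor) : Set (List Bool) :=
  {t | ∃ i : Fin (n - 1), t = gapMeet X i}

/-- `D̂(X) = D(X) ∪ {x_i ↾ |x_{j-1} ∩ x_j| : i ≠ j}`. -/
def Dhat (n : ℕ) (X : Fin n → Cantor) : Set (List Bool) :=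
  Dset n X ∪ {t | ∃ (i : Fin n) (j : Fin (n - 1)), (i : ℕ) ≠ (j : ℕ) + 1 ∧
    t = restr (X i) (gapLen X j)}

/-- The abstract index set for the nodes of `D̂(X)`; it serves as the fixed
representative `C^n_⪯` of the isomorphism class of the trees `D̂(X)`,
`X ∈ [2^ω]^n_⪯`, the isomorphism `g_X : D̂(X) → C^n_⪯` being the indexing. -/
abbrev CIdx (n : ℕ) : Type := Fin (n - 1) ⊕ Fin n × Fin (n - 1)

/-- The node of `D̂(X)` indexed by a given element of `C^n_⪯`: `inl j` indexes
`x_{j-1} ∩ x_j` and `inr (i, j)` indexes `x_i ↾ |x_{j-1} ∩ x_j|`. -/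
noncomputable def nodeOf {n : ℕ} (X : Fin n → Cantor) : CIdx n → List Bool
  | .inl j => gapMeet X j
  | .inr (i, j) => restr (X i) (gapLen X j)

/-- `D̂(X):J = {x ↾ k : g_X(x ↾ k) ∈ J}` for `J ⊆ C^n_⪯`. -/
noncomputable def DhatSel {n : ℕ} (X : Fin n → Cantor) (J : Set (CIdx n)) : Set (List Bool) :=
  nodeOf X '' J

/-- A map is Baire measurable if preimages of open sets have the Baire property. -/
def BaireMeasurableFun {α β : Type*} [TopologicalSpace α] [TopologicalSpace β]
    (f : α → β) : Prop :=
  ∀ U : Set β, IsOpen U → BaireMeasurableSet (f ⁻¹' U)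

theorem splitLevel_spec {x y : Cantor} (h : x ≠ y) :
    x (splitLevel x y) ≠ y (splitLevel x y) ∧ ∀ m < splitLevel x y, x m = y m := by
  classical
  have e : splitLevel x y = Nat.find (Function.ne_iff.mp h) := by
    unfold splitLevel
    rw [dif_neg h]
  rw [e]
  exact ⟨Nat.find_spec (Function.ne_iff.mp h),
    fun m hm => not_not.mp (Nat.find_min (Function.ne_iff.mp h) hm)⟩

theorem splitLevel_eq {x y : Cantor} {k : ℕ} (h : x k ≠ y k) (hk : ∀ m < k, x m = y m) :
    splitLevel x y = k := by
  have hne : x ≠ y := fun e => h (congrFun e k)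
  obtain ⟨h1, h2⟩ := splitLevel_spec hne
  rcases lt_trichotomy (splitLevel x y) k with hlt | heq | hgt
  · exact absurd (hk _ hlt) h1
  · exact heq
  · exact absurd (h2 _ hgt) h

theorem splitLevel_symm (x y : Cantor) : splitLevel x y = splitLevel y x := by
  by_cases h : x = y
  · rw [h]
  · obtain ⟨h1, h2⟩ := splitLevel_spec h
    exact (splitLevel_eq h1.symm fun m hm => (h2 m hm).symm).symm

/-- The lexicographic order for `b = false`, and its reverse for `b = true`. -/
def dirLex (b : Bool) (x y : Cantor) : Prop := x ≠ y ∧ x (splitLevel x y) = b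

theorem dirLex_of_apply {b : Bool} {x y : Cantor} {k : ℕ} (hx : x k = b) (hy : y k ≠ b)
    (hk : ∀ m < k, x m = y m) : dirLex b x y := by
  have hne : x k ≠ y k := fun e => hy (e ▸ hx)
  refine ⟨fun e => hne (congrFun e k), ?_⟩
  rw [splitLevel_eq hne hk, hx]

theorem dirLex_apply_right {b : Bool} {x y : Cantor} (h : dirLex b x y) :
    y (splitLevel x y) ≠ b := fun e =>
  (splitLevel_spec h.1).1 (h.2.trans e.symm)

theorem dirLex_total (b : Bool) {x y : Cantor} (h : x ≠ y) : dirLex b x y ∨ dirLex b y x := by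
  by_cases hx : x (splitLevel x y) = b
  · exact .inl ⟨h, hx⟩
  · refine .inr (dirLex_of_apply (k := splitLevel x y) ?_ hx
      fun m hm => ((splitLevel_spec h).2 m hm).symm)
    have := (splitLevel_spec h).1
    revert this hx
    cases x (splitLevel x y) <;> cases y (splitLevel x y) <;> cases b <;> simp

theorem clex_iff_dirLex_true {x y : Cantor} : clex x y ↔ dirLex true y x := by
  constructor
  · intro h
    have h' := dirLex_apply_right (b := false) h
    refine ⟨h.1.symm, ?_⟩
    rw [splitLevel_symm]
    simpa using h'
  · intro h
    have h' := dirLex_apply_right h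
    refine ⟨h.1.symm, ?_⟩
    rw [splitLevel_symm]
    simpa using h'

theorem eq_of_restr_eq {x y : Cantor} {k l : ℕ} (h : restr x k = restr y l) :
    k = l ∧ ∀ m < k, x m = y m := by
  have hl : k = l := by simpa [restr] using congrArg List.length h
  subst hl
  exact ⟨rfl, fun m hm => List.map_inj_left.mp h m (List.mem_range.mpr hm)⟩

/-- A set on which the lexicographic order, or its reverse, is contained in a well-founded
relation is countable. -/
theorem countable_of_dirLex_imp (b : Bool) {r : Cantor → Cantor → Prop} (hr : WellFounded r)
    {Y : Set Cantor} (h : ∀ x ∈ Y, ∀ y ∈ Y, dirLex b x y → r x y) : Y.Countable := by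
  have key : ∀ x : Cantor, (∃ y ∈ Y, dirLex b x y) →
      ∃ s ∈ Y, dirLex b x s ∧ ∀ z ∈ Y, dirLex b x z → ¬ r z s := by
    rintro x ⟨y, hy, hxy⟩
    obtain ⟨s, hs, hmin⟩ := hr.has_min {z | z ∈ Y ∧ dirLex b x z} ⟨y, hy, hxy⟩
    exact ⟨s, hs.1, hs.2, fun z hz hxz => hmin z ⟨hz, hxz⟩⟩
  choose! s hsY hs hmin using key
  have hA : {x | x ∈ Y ∧ ∃ y ∈ Y, dirLex b x y}.Countable := by
    have hinj : InjOn (fun x => meet x (s x)) {x | x ∈ Y ∧ ∃ y ∈ Y, dirLex b x y} := by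
      rintro x ⟨hx, hx'⟩ y ⟨hy, hy'⟩ hxy
      obtain ⟨hlen, hagree⟩ := eq_of_restr_eq hxy
      have hsx := hs x hx'
      have hsy := hs y hy'
      have h1 : dirLex b y (s x) :=
        dirLex_of_apply (k := splitLevel x (s x)) (hlen ▸ hsy.2) (dirLex_apply_right hsx)
          fun m hm => (hagree m hm).symm.trans ((splitLevel_spec hsx.1).2 m hm)
      have h2 : dirLex b x (s y) :=
        dirLex_of_apply (k := splitLevel x (s x)) hsx.2 (hlen ▸ dirLex_apply_right hsy)
          fun m hm => (hagree m hm).trans ((splitLevel_spec hsy.1).2 m (hlen ▸ hm))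
      by_contra hne
      rcases dirLex_total b hne with hlt | hlt
      · exact hmin x hx' y hy hlt (h y hy _ (hsY x hx') h1)
      · exact hmin y hy' x hx hlt (h x hx _ (hsY y hy') h2)
    exact (mapsTo_univ _ _).countable_of_injOn hinj countable_univ
  have hB : {x | x ∈ Y ∧ ¬ ∃ y ∈ Y, dirLex b x y}.Countable := by
    refine Set.Subsingleton.countable ?_
    rintro x ⟨hx, hx'⟩ y ⟨hy, hy'⟩
    by_contra hne
    rcases dirLex_total b hne with hlt | hlt
    · exact hx' ⟨y, hy, hlt⟩
    · exact hy' ⟨x, hx, hlt⟩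
  refine (hA.union hB).mono fun x hx => ?_
  by_cases hsucc : ∃ y ∈ Y, dirLex b x y
  · exact .inl ⟨hx, hsucc⟩
  · exact .inr ⟨hx, hsucc⟩

/-- **Sierpiński.** There is a `2`-coloring of the lexicographically increasing pairs of
elements of `2^ω` which is not constant on the pairs from any uncountable `Y ⊆ 2^ω`. -/
theorem sierpinski_coloring :
    ∃ c : Cantor → Cantor → Fin 2,
      ∀ Y : Set Cantor, ¬Y.Countable →
        ∃ x₀ x₁ y₀ y₁ : Cantor, x₀ ∈ Y ∧ x₁ ∈ Y ∧ y₀ ∈ Y ∧ y₁ ∈ Y ∧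
          clex x₀ x₁ ∧ clex y₀ y₁ ∧ c x₀ x₁ ≠ c y₀ y₁ := by
  classical
  have wf : WellFounded (WellOrderingRel : Cantor → Cantor → Prop) :=
    IsWellFounded.wf
  refine ⟨fun x y => if WellOrderingRel x y then 1 else 0, fun Y hY => ?_⟩
  have h0 : ∃ x ∈ Y, ∃ y ∈ Y, clex x y ∧ ¬ WellOrderingRel x y := by
    by_contra! hcon
    exact hY (countable_of_dirLex_imp false wf hcon)
  have h1 : ∃ x ∈ Y, ∃ y ∈ Y, clex x y ∧ WellOrderingRel x y := by
    by_contra! hcon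
    refine hY (countable_of_dirLex_imp true wf fun x hx y hy hxy => ?_)
    have hn := hcon y hy x hx (clex_iff_dirLex_true.mpr hxy)
    rcases trichotomous_of WellOrderingRel x y with h | h | h
    · exact h
    · exact absurd h hxy.1
    · exact absurd h hn
  obtain ⟨x₀, hx₀, x₁, hx₁, hx, hrx⟩ := h0
  obtain ⟨y₀, hy₀, y₁, hy₁, hy, hry⟩ := h1
  exact ⟨x₀, x₁, y₀, y₁, hx₀, hx₁, hy₀, hy₁, hx, hy, by simp [hrx, hry]⟩
end

section
/- There exists a partition of [2^ω]^2 into infinitely many pieces (equivalently, a map c : [2^ω]^2 → ω which is surjective on every large square) such that for every subset X of 2^ω of cardinality of the continuum, [X]^2 intersects every piece of the partition; that is, c restricted to [X]^2 attains every value in ω. -/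
/-! The proof attaches to every `x` in the Cantor space a sequence of reals `e 0 x, e 1 x, …` such
that, for each `k`, `e k x` is generic over `e 0 x, …, e (k-1) x`: a family of continuum many
functions `limFun k D : ℝ^k → ℝ` is fixed, and a diagonalization along a well-order of type `𝔠`
ensures that each equation `e k x = limFun k D (e 0 x, …, e (k-1) x)` holds for fewer than `𝔠` many
`x` (`exists_generic`). The colour of `(x, y)` is the least `j` such that `e (j+1)` and `e 0` order
`x` and `y` differently.

Call `S ⊆ ℝ^k` a grid (`Grid`) if for some `q ∈ ℚ^k` it meets all `2^k` open orthants with corner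
`q`. If the image of `X` under `(e 0, …, e (m+1))` is a grid, then two points of `X` in opposite
orthants are ordered the same way by `e 0, …, e m` and the other way by `e (m+1)`, so the colour `m`
occurs, whichever of the two points is lexicographically smaller.

It remains to see that the image of a set of size `𝔠` is a grid (`exists_cover`). Let
`S ⊆ ℝ^(k+1)`, and for rational `q` let `W q` be the intersection of the closures in `ℝ^k` of the
projections of `{z ∈ S | z k < q}` and `{z ∈ S | q < z k}`. Since orthants are open, if some `W q` is
a grid then so is `S`. Over a point outside all `W q`, the last coordinate of a point of `S` is the
supremum of those `q` for which the point lies in the closure of the second projection; this is one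
of the functions `limFun k D`. By induction on `k`, every non-grid is covered by
countably many sets `{z | z i = limFun i D (z 0, …, z (i-1))}`; as `𝔠` has uncountable cofinality, a
set of size `𝔠` cannot be covered by their preimages. -/


open Set

open Cardinal TopologicalSpace

theorem exists_nat_basis (k : ℕ) :
    ∃ B : ℕ → Set (Fin k → ℝ), IsTopologicalBasis (range B) := by
  obtain ⟨b, hb, -, hB⟩ := exists_countable_basis (Fin k → ℝ)
  have hne : b.Nonempty := by
    by_contra h
    rw [Set.not_nonempty_iff_eq_empty] at h
    have := hB.sUnion_eq
    rw [h, sUnion_empty] at this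
    exact Set.empty_ne_univ this
  obtain ⟨B, rfl⟩ := hb.exists_eq_range hne
  exact ⟨B, hB⟩

/-- An enumeration of a topological basis of `ℝ^k`. -/
noncomputable def basisSeq (k : ℕ) : ℕ → Set (Fin k → ℝ) := (exists_nat_basis k).choose

theorem basisSeq_basis (k : ℕ) : IsTopologicalBasis (range (basisSeq k)) :=
  (exists_nat_basis k).choose_spec

/-- The code `D` describes a sequence of closed subsets `C q` of `ℝ^k`, `q ∈ ℚ`: the set `C q` is
the complement of the union of the basic open sets with index `n`, `(q, n) ∈ D`. The function
`limFun k D` maps `x` to the supremum of all `q` with `x ∈ C q`. -/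
noncomputable def limFun (k : ℕ) (D : Set (ℚ × ℕ)) (x : Fin k → ℝ) : ℝ :=
  sSup {r : ℝ | ∃ q : ℚ, (q : ℝ) = r ∧ ∀ n, (q, n) ∈ D → x ∉ basisSeq k n}

/-- `S` meets all `2^k` open orthants with corner `q`, for some `q ∈ ℚ^k`. -/
def Grid (k : ℕ) (S : Set (Fin k → ℝ)) : Prop :=
  ∃ q : Fin k → ℚ, ∀ σ : Fin k → Bool, ∃ x ∈ S, ∀ i,
    (σ i = true → (q i : ℝ) < x i) ∧ (σ i = false → x i < (q i : ℝ))

theorem isOpen_orthant {k : ℕ} (q : Fin k → ℚ) (σ : Fin k → Bool) :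
    IsOpen {x : Fin k → ℝ | ∀ i,
      (σ i = true → (q i : ℝ) < x i) ∧ (σ i = false → x i < (q i : ℝ))} := by
  rw [ofPred_forall]
  refine isOpen_iInter_of_finite fun i => ?_
  cases h : σ i
  · simpa using isOpen_lt (continuous_apply i) continuous_const
  · simpa using isOpen_lt continuous_const (continuous_apply i)

/-- The projection to `ℝ^k` of the part of `S` whose last coordinate exceeds `q`. -/
def projGt {k : ℕ} (S : Set (Fin (k + 1) → ℝ)) (q : ℚ) : Set (Fin k → ℝ) :=
  {x | ∃ z ∈ S, (q : ℝ) < z (Fin.last k) ∧ Fin.init z = x}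

/-- The projection to `ℝ^k` of the part of `S` whose last coordinate is below `q`. -/
def projLt {k : ℕ} (S : Set (Fin (k + 1) → ℝ)) (q : ℚ) : Set (Fin k → ℝ) :=
  {x | ∃ z ∈ S, z (Fin.last k) < (q : ℝ) ∧ Fin.init z = x}

theorem grid_of_grid_closure {k : ℕ} {S : Set (Fin (k + 1) → ℝ)} {q : ℚ}
    (h : Grid k (closure (projGt S q) ∩ closure (projLt S q))) : Grid (k + 1) S := by
  obtain ⟨p, hp⟩ := h
  refine ⟨Fin.snoc p q, fun σ => ?_⟩
  obtain ⟨x, ⟨hx1, hx2⟩, hx⟩ := hp (fun i => σ i.castSucc)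
  have ho := isOpen_orthant p (fun i => σ i.castSucc)
  cases hσ : σ (Fin.last k)
  · obtain ⟨_, hy, z, hz, hzq, rfl⟩ := mem_closure_iff.1 hx2 _ ho hx
    refine ⟨z, hz, fun i => ?_⟩
    refine Fin.lastCases ?_ (fun j => ?_) i
    · simp [hσ, hzq]
    · simpa [Fin.init] using hy j
  · obtain ⟨_, hy, z, hz, hzq, rfl⟩ := mem_closure_iff.1 hx1 _ ho hx
    refine ⟨z, hz, fun i => ?_⟩
    refine Fin.lastCases ?_ (fun j => ?_) i
    · simp [hσ, hzq]
    · simpa [Fin.init] using hy j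

/-- The code of the sequence of closures of the sets `projGt S q`. -/
def codeOf {k : ℕ} (S : Set (Fin (k + 1) → ℝ)) : Set (ℚ × ℕ) :=
  {p | ¬ (basisSeq k p.2 ∩ projGt S p.1).Nonempty}

theorem mem_closure_projGt {k : ℕ} (S : Set (Fin (k + 1) → ℝ)) (q : ℚ) (x : Fin k → ℝ) :
    x ∈ closure (projGt S q) ↔ ∀ n, (q, n) ∈ codeOf S → x ∉ basisSeq k n := by
  rw [(basisSeq_basis k).mem_closure_iff]
  simp only [mem_range, forall_exists_index, forall_apply_eq_imp_iff, codeOf, mem_ofPred_eq]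
  exact forall_congr' fun n => by tauto

theorem last_eq_limFun {k : ℕ} {S : Set (Fin (k + 1) → ℝ)} {z : Fin (k + 1) → ℝ} (hz : z ∈ S)
    (h : ∀ q, Fin.init z ∉ closure (projGt S q) ∩ closure (projLt S q)) :
    z (Fin.last k) = limFun k (codeOf S) (Fin.init z) := by
  have key : IsLUB {r : ℝ | ∃ q : ℚ, (q : ℝ) = r ∧
      ∀ n, (q, n) ∈ codeOf S → Fin.init z ∉ basisSeq k n} (z (Fin.last k)) := by
    simp only [← mem_closure_projGt]
    constructor
    · rintro _ ⟨q, rfl, hq⟩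
      by_contra! hlt
      exact h q ⟨hq, subset_closure ⟨z, hz, hlt, rfl⟩⟩
    · intro b hb
      by_contra! hlt
      obtain ⟨q, hq1, hq2⟩ := exists_rat_btwn hlt
      exact absurd (hb ⟨q, rfl, subset_closure ⟨z, hz, hq2, rfl⟩⟩) (not_le.2 hq1)
  refine (key.csSup_eq ?_).symm
  obtain ⟨q, hq⟩ := exists_rat_lt (z (Fin.last k))
  exact ⟨q, q, rfl, (mem_closure_projGt _ _ _).1 (subset_closure ⟨z, hz, hq, rfl⟩)⟩

theorem exists_cover (k : ℕ) : ∀ S : Set (Fin k → ℝ), ¬ Grid k S →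
    ∃ N : Set (ℕ × Set (ℚ × ℕ)), N.Countable ∧ ∀ z ∈ S, ∃ p ∈ N, ∃ h : p.1 < k,
      z ⟨p.1, h⟩ = limFun p.1 p.2 (fun i => z ⟨i.1, i.2.trans h⟩) := by
  induction k with
  | zero =>
    intro S hS
    refine ⟨∅, countable_empty, fun z hz => (hS ?_).elim⟩
    exact ⟨fun _ => 0, fun σ => ⟨z, hz, fun i => i.elim0⟩⟩
  | succ k ih =>
    intro S hS
    have h1 : ∀ q : ℚ, ¬ Grid k (closure (projGt S q) ∩ closure (projLt S q)) :=
      fun q hq => hS (grid_of_grid_closure hq)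
    choose N hN hcov using fun q => ih _ (h1 q)
    refine ⟨insert (k, codeOf S) (⋃ q, N q), (countable_iUnion hN).insert _, fun z hz => ?_⟩
    by_cases hq : ∃ q, Fin.init z ∈ closure (projGt S q) ∩ closure (projLt S q)
    · obtain ⟨q, hq⟩ := hq
      obtain ⟨p, hp, hlt, he⟩ := hcov q _ hq
      exact ⟨p, mem_insert_of_mem _ (mem_iUnion.2 ⟨q, hp⟩), hlt.trans k.lt_succ_self, he⟩
    · push Not at hq
      exact ⟨_, mem_insert _ _, k.lt_succ_self, last_eq_limFun hz hq⟩

/-- The diagonalization: along a well-order of type `𝔠`, the real `e k x` avoids the values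
`limFun k D (e 0 x, …, e (k-1) x)` for all codes `D` preceding `x`. -/
theorem exists_generic : ∃ e : ℕ → Cantor → ℝ, ∀ k D,
    #{x : Cantor | e k x = limFun k D (fun i : Fin k => e i x)} < 𝔠 := by
  have hC : #Cantor = #((𝔠 : Cardinal.{0}).ord.ToType) := by simp
  have hD : #(Set (ℚ × ℕ)) = #((𝔠 : Cardinal.{0}).ord.ToType) := by simp
  have hI : ∀ t : (𝔠 : Cardinal.{0}).ord.ToType, #(Iio t) < 𝔠 := fun t => by
    simpa using mk_Iio_lt t
  obtain ⟨a⟩ := Cardinal.eq.1 hC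
  obtain ⟨d⟩ := Cardinal.eq.1 hD
  have avoid : ∀ k (x : Cantor) (v : Fin k → ℝ),
      ∃ y : ℝ, ∀ D, d D < a x → y ≠ limFun k D v := by
    intro k x v
    have hlt : #((fun t => limFun k (d.symm t) v) '' Iio (a x)) < #ℝ := by
      rw [Cardinal.mk_real]
      exact Cardinal.mk_image_le.trans_lt (hI _)
    by_contra! h
    refine hlt.ne ?_
    rw [Set.eq_univ_of_forall (s := (fun t => limFun k (d.symm t) v) '' Iio (a x)), mk_univ]
    intro y
    obtain ⟨D, hD1, hD2⟩ := h y
    exact ⟨d D, hD1, by simp [hD2]⟩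
  choose g hg using avoid
  let E : (k : ℕ) → Cantor → (Fin k → ℝ) := fun k x =>
    Nat.rec (motive := fun k => Fin k → ℝ) (fun i => i.elim0)
      (fun k v => Fin.snoc v (g k x v)) k
  have hE : ∀ k x, (fun i : Fin k => g i x (E i x)) = E k x := by
    intro k x
    induction k with
    | zero => exact Subsingleton.elim _ _
    | succ k ih =>
      funext i
      refine Fin.lastCases ?_ (fun j => ?_) i
      · simp [E]
      · have := congrFun ih j
        simpa [E] using this
  refine ⟨fun k x => g k x (E k x), fun k D => ?_⟩
  have hsub : {x : Cantor | g k x (E k x) = limFun k D (fun i : Fin k => g i x (E i x))} ⊆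
      a.symm '' insert (d D) (Iio (d D)) := by
    intro x hx
    refine ⟨a x, ?_, by simp⟩
    rw [mem_ofPred_eq, hE] at hx
    rcases lt_trichotomy (d D) (a x) with h | h | h
    · exact (hg k x _ D h hx).elim
    · exact Or.inl h.symm
    · exact Or.inr h
  refine (mk_le_mk_of_subset hsub).trans_lt (mk_image_le.trans_lt (mk_insert_le.trans_lt ?_))
  exact add_lt_of_lt aleph0_le_continuum (hI _)
    (one_lt_aleph0.trans_le aleph0_le_continuum)

theorem clex_total {x y : Cantor} (h : x ≠ y) : clex x y ∨ clex y x := by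
  have hs : splitLevel x y = splitLevel y x := by
    simp [splitLevel, h, h.symm, ne_comm]
  have hne : x (splitLevel x y) ≠ y (splitLevel x y) := by
    have := @Nat.find_spec _ (fun n => Classical.propDecidable _) (Function.ne_iff.mp h)
    simp only [splitLevel, h, dite_false]
    convert this
  cases hx : x (splitLevel x y)
  · exact Or.inl ⟨h, hx⟩
  · refine Or.inr ⟨h.symm, ?_⟩
    rw [← hs]
    rw [hx] at hne
    simpa using hne.symm

theorem not_covered {X : Set Cantor} (hX : #X = 𝔠) {ι : Type} {N : Set ι} (hN : N.Countable)
    (A : ι → Set Cantor) (hA : ∀ i, #(A i) < 𝔠) : ¬ X ⊆ ⋃ i ∈ N, A i := by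
  intro h
  have := hN.to_subtype
  have hcof : ℵ₀ < (𝔠 : Cardinal.{0}).ord.cof := by
    rw [← two_power_aleph0]
    exact lt_cof_ord_power le_rfl one_lt_two
  rw [biUnion_eq_iUnion] at h
  have h1 : #(⋃ i : N, A i) < 𝔠 := by
    refine mk_iUnion_le_sum_mk.trans_lt ?_
    refine (sum_le_mk_mul_iSup _).trans_lt ?_
    refine mul_lt_of_lt aleph0_le_continuum
      ((mk_le_aleph0).trans_lt aleph0_lt_continuum) ?_
    exact iSup_lt_of_lt_cof_ord (mk_le_aleph0.trans_lt hcof) (fun i => hA i)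
  exact absurd (hX ▸ mk_le_mk_of_subset h) (not_le.2 h1)

/-- **Galvin–Shelah.** There is a partition of `[2^ω]^2` into infinitely many pieces
(a map `c : [2^ω]^2 → ω`) such that for every `X ⊆ 2^ω` of cardinality continuum,
`c` restricted to `[X]^2` attains every value in `ω`. -/
theorem galvin_shelah :
    ∃ c : Cantor → Cantor → ℕ,
      ∀ X : Set Cantor, Cardinal.mk X = Cardinal.continuum →
        ∀ m : ℕ, ∃ x ∈ X, ∃ y ∈ X, clex x y ∧ c x y = m := by
  obtain ⟨e, he⟩ := exists_generic
  refine ⟨fun x y => sInf {j | ¬ (e 0 x < e 0 y ↔ e (j + 1) x < e (j + 1) y)},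
    fun X hX m => ?_⟩
  have hgrid : Grid (m + 2) ((fun x (i : Fin (m + 2)) => e i x) '' X) := by
    by_contra hg
    obtain ⟨N, hN, hcov⟩ := exists_cover _ _ hg
    refine not_covered hX hN
      (fun p => {x : Cantor | e p.1 x = limFun p.1 p.2 (fun i : Fin p.1 => e i x)})
      (fun p => he _ _) fun x hx => ?_
    obtain ⟨p, hp, _, hpe⟩ := hcov _ ⟨x, hx, rfl⟩
    exact mem_biUnion hp hpe
  obtain ⟨q, hq⟩ := hgrid
  obtain ⟨_, ⟨u, hu, rfl⟩, hu'⟩ := hq (fun i => decide (i.1 ≤ m))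
  obtain ⟨_, ⟨v, hv, rfl⟩, hv'⟩ := hq (fun i => !decide (i.1 ≤ m))
  have hlow : ∀ i ≤ m, e i v < e i u := fun i hi =>
    ((hv' ⟨i, by omega⟩).2 (by simpa using hi)).trans ((hu' ⟨i, by omega⟩).1 (by simpa using hi))
  have hhigh : e (m + 1) u < e (m + 1) v :=
    ((hu' ⟨m + 1, by omega⟩).2 (by simp)).trans ((hv' ⟨m + 1, by omega⟩).1 (by simp))
  have hne : u ≠ v := by
    rintro rfl
    exact lt_irrefl _ hhigh
  have h0 := hlow 0 m.zero_le
  rcases clex_total hne with h | h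
  · refine ⟨u, hu, v, hv, h, IsLeast.csInf_eq ⟨?_, fun j hj => ?_⟩⟩
    · simp [hhigh, h0.le]
    · by_contra! hlt
      exact hj (iff_of_false h0.not_gt (hlow (j + 1) hlt).not_gt)
  · refine ⟨v, hv, u, hu, h, IsLeast.csInf_eq ⟨?_, fun j hj => ?_⟩⟩
    · simp [hhigh.le, h0]
    · by_contra! hlt
      exact hj (iff_of_true h0 (hlow (j + 1) hlt))
end

section
/- For every positive integer n and every meager subset M of the product space (2^ω)^n, there exists a perfect subset P of 2^ω such that no n-tuple of pairwise distinct elements of P belongs to M; in particular [P]^n avoids M. -/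
/-!
The perfect set is found by a Baire category argument in the hyperspace `Compacts Cantor` of
compact subsets of the Cantor space with the Vietoris topology, which is compact Hausdorff and
hence a Baire space: a generic nonempty compact set works.

Let `U` be one of the countably many dense open sets whose intersection avoids `M`, and let `S` be
one of countably many closed sets of tuples exhausting the injective ones.

* The compact sets `K` all of whose tuples in `S` lie in `U` form an open set, since the bad pairs
  `(K, Z)` form a closed set whose projection along the compact factor is closed (`isOpen_avoid`).
* They form a dense set: finite sets are dense in the hyperspace, a finite set is the range of some
  `z : ι → Cantor`, and for generic `z` every tuple `z ∘ s` with `s` injective lies in `U`, because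
  `z ↦ z ∘ s` is a continuous open map (`dense_avoid`).
* For clopen `C`, the compact sets that do not meet `C` in exactly one point form a dense open set
  (`isOpen_split`, `dense_split`). As there are countably many clopen sets and they form a basis,
  a generic compact set has no isolated points.
-/


open Set

open TopologicalSpace Topology Filter

lemma neBot_punctured (x : Cantor) : (𝓝[≠] x).NeBot := by
  rw [← mem_closure_iff_nhdsWithin_neBot]
  have h : Tendsto (fun k => Function.update x k (!x k)) atTop (𝓝 x) := by
    rw [tendsto_pi_nhds]
    intro i
    refine tendsto_const_nhds.congr' ?_
    filter_upwards [eventually_gt_atTop i] with k hk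
    simp [Function.update_of_ne hk.ne]
  refine mem_closure_of_tendsto h (Eventually.of_forall fun k e => ?_)
  have := congrFun e k
  simp at this

/-- The membership relation between compact sets and points is closed in the Vietoris topology. -/
lemma isClosed_mem_compacts : IsClosed {p : Compacts Cantor × Cantor | p.2 ∈ p.1} := by
  have h : IsOpen {p : Compacts Cantor × Cantor | Disjoint ({p.2} : Compacts Cantor) p.1} :=
    Compacts.isOpen_setOfPred_disjoint.preimage
      ((Compacts.continuous_singleton.comp continuous_snd).prodMk continuous_fst)
  rw [← isOpen_compl_iff]
  convert h using 1
  ext p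
  simp [← Compacts.disjoint_coe_iff]

/-- The complement is the projection of a closed set of pairs `(K, Z)` along the compact space of
tuples. Closedness of `S` is what makes the set of pairs closed. -/
lemma isOpen_avoid {n : ℕ} {U S : Set (Fin n → Cantor)} (hU : IsOpen U) (hS : IsClosed S) :
    IsOpen {K : Compacts Cantor | ∀ Z : Fin n → Cantor, (∀ i, Z i ∈ K) → Z ∈ S → Z ∈ U} := by
  have hF : IsClosed {p : Compacts Cantor × (Fin n → Cantor) |
      (∀ i, p.2 i ∈ p.1) ∧ p.2 ∈ S ∧ p.2 ∈ Uᶜ} := by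
    refine IsClosed.inter ?_ ((hS.preimage continuous_snd).inter
      (hU.isClosed_compl.preimage continuous_snd))
    have : {p : Compacts Cantor × (Fin n → Cantor) | ∀ i, p.2 i ∈ p.1} =
        ⋂ i, {p | p.2 i ∈ p.1} := by ext; simp
    change IsClosed {p : Compacts Cantor × (Fin n → Cantor) | ∀ i, p.2 i ∈ p.1}
    rw [this]
    have hc (i : Fin n) : Continuous fun p : Compacts Cantor × (Fin n → Cantor) => (p.1, p.2 i) :=
      continuous_fst.prodMk ((continuous_apply i).comp continuous_snd)
    exact isClosed_iInter fun i => isClosed_mem_compacts.preimage (hc i)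
  have := (isClosedMap_fst_of_compactSpace _ hF).isOpen_compl
  convert this using 1
  ext K
  simp

/-- Selecting coordinates along an injection is open: through each point `z` there is a continuous
section, filling the remaining coordinates with those of `z`. -/
lemma isOpenMap_comp_injective {ι κ : Type*} {s : κ → ι} (hs : Function.Injective s) :
    IsOpenMap (fun z : ι → Cantor => z ∘ s) := by
  refine IsOpenMap.of_sections fun z => ⟨fun w => Function.extend s w z, ?_, ?_, ?_⟩
  · refine Continuous.continuousAt (continuous_pi fun i => ?_)
    by_cases hi : ∃ j, s j = i
    · obtain ⟨j, rfl⟩ := hi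
      simpa [hs.extend_apply] using continuous_apply j
    · simpa [Function.extend_apply' _ _ _ hi] using continuous_const
  · ext i
    by_cases hi : ∃ j, s j = i
    · obtain ⟨j, rfl⟩ := hi
      simp [hs.extend_apply]
    · simp [Function.extend_apply' _ _ _ hi]
  · intro w
    ext i
    simp [hs.extend_apply]

/-- Any nonempty open set of compact sets contains a finite set; moving its points to a generic
position puts all its injective tuples into `G` simultaneously. -/
lemma dense_avoid {n : ℕ} {G : Set (Fin n → Cantor)} (hG : G ∈ residual _) :
    Dense {K : Compacts Cantor |
      ∀ Z : Fin n → Cantor, (∀ i, Z i ∈ K) → Function.Injective Z → Z ∈ G} := by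
  rw [dense_iff_inter_open]
  intro O hO hne
  obtain ⟨K, hKO, hK⟩ := Compacts.dense_setOfPred_finite.inter_open_nonempty O hO hne
  have : Finite K := hK
  let r : (K → Cantor) → Compacts Cantor := fun z => ⟨Set.range z, (Set.finite_range z).isCompact⟩
  have hr : Continuous r := by
    let := TopologicalSpace.vietoris Cantor
    exact Compacts.isEmbedding_coe.continuous_iff.2 vietoris.continuous_range_of_finite
  have hrK : r Subtype.val = K := by ext; simp [r]
  have hres : ∀ᶠ z in residual (K → Cantor), ∀ s : Fin n → K, Function.Injective s → z ∘ s ∈ G := by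
    rw [eventually_countable_forall]
    intro s
    by_cases hs : Function.Injective s
    · have hpre : (fun z : K → Cantor => z ∘ s) ⁻¹' G ∈ residual (K → Cantor) :=
        tendsto_residual_of_isOpenMap (continuous_pi fun i => continuous_apply (s i))
          (isOpenMap_comp_injective hs) hG
      filter_upwards [hpre] with z hz _ using hz
    · simp [hs]
  obtain ⟨z, hz, hzG⟩ := (dense_of_mem_residual hres).inter_open_nonempty _ (hO.preimage hr)
    ⟨Subtype.val, by simpa [hrK] using hKO⟩
  refine ⟨r z, hz, fun Z hZ hinj => ?_⟩
  choose s hs using (show ∀ i, ∃ a, z a = Z i from hZ)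
  have hsZ : z ∘ s = Z := funext hs
  exact hsZ ▸ hzG s (Function.Injective.of_comp (hsZ ▸ hinj))

/-- The condition says that `K` does not meet `C` in exactly one point. -/
lemma isOpen_split {C : Set Cantor} (hC : IsClopen C) :
    IsOpen {K : Compacts Cantor | ∀ x ∈ K, x ∈ C → ∃ y ∈ K, y ∈ C ∧ y ≠ x} := by
  rw [isOpen_iff_mem_nhds]
  intro K hK
  by_cases h : ∃ x ∈ K, x ∈ C
  · obtain ⟨x, hxK, hxC⟩ := h
    obtain ⟨y, hyK, hyC, hyx⟩ := hK x hxK hxC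
    obtain ⟨V, W, hV, hW, hyV, hxW, hVW⟩ := t2_separation hyx
    filter_upwards [(Compacts.isOpen_inter_nonempty_of_isOpen (hV.inter hC.isOpen)).mem_nhds
        ⟨y, hyK, hyV, hyC⟩,
      (Compacts.isOpen_inter_nonempty_of_isOpen (hW.inter hC.isOpen)).mem_nhds
        ⟨x, hxK, hxW, hxC⟩]
    rintro L ⟨v, hvL, hvV, hvC⟩ ⟨w, hwL, hwW, hwC⟩ u hu -
    have hvw : v ≠ w := fun e => Set.disjoint_left.1 hVW hvV (e ▸ hwW)
    by_cases e : v = u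
    · exact ⟨w, hwL, hwC, fun e' => hvw (e.trans e'.symm)⟩
    · exact ⟨v, hvL, hvC, e⟩
  · push Not at h
    filter_upwards [(Compacts.isOpen_subsets_of_isOpen hC.compl.isOpen).mem_nhds h]
    intro L hL x hx hxC
    exact absurd hxC (hL hx)

/-- If `K` meets `C` at `x`, then adding to `K` a point of `C` close to `x` changes `K` arbitrarily
little in the Vietoris topology. -/
lemma dense_split {C : Set Cantor} (hC : IsOpen C) :
    Dense {K : Compacts Cantor | ∀ x ∈ K, x ∈ C → ∃ y ∈ K, y ∈ C ∧ y ≠ x} := by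
  rw [dense_iff_inter_open]
  rintro O hO ⟨K, hK⟩
  by_cases h : ∃ x ∈ K, x ∈ C
  · obtain ⟨x, hxK, hxC⟩ := h
    have hcont : Continuous fun y : Cantor => K ⊔ {y} :=
      continuous_const.sup Compacts.continuous_singleton
    have hx : K ⊔ {x} = K := sup_eq_left.2 (by simpa [← SetLike.coe_subset_coe] using hxK)
    have := neBot_punctured x
    obtain ⟨y, ⟨hyO, hyC⟩, hyx⟩ := (Filter.nonempty_of_mem (f := 𝓝[≠] x)
      (Filter.inter_mem (mem_nhdsWithin_of_mem_nhds (((hO.preimage hcont).inter hC).mem_nhds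
        ⟨by simpa [hx] using hK, hxC⟩)) self_mem_nhdsWithin))
    refine ⟨K ⊔ {y}, hyO, fun u _ _ => ?_⟩
    by_cases e : x = u
    · exact ⟨y, by simp [← SetLike.mem_coe], hyC, e ▸ hyx⟩
    · exact ⟨x, Or.inl hxK, hxC, e⟩
  · exact ⟨K, hK, fun x hx hxC => absurd ⟨x, hx, hxC⟩ h⟩

lemma isOpen_injective (n : ℕ) : IsOpen {Z : Fin n → Cantor | Function.Injective Z} := by
  have : {Z : Fin n → Cantor | Function.Injective Z} =
      ⋂ i, ⋂ j, ⋂ _ : i ≠ j, {Z | Z i ≠ Z j} := by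
    ext Z
    simp only [Set.mem_ofPred_eq, Set.mem_iInter]
    exact ⟨fun h i j hij e => hij (h e), fun h i j e => by_contra fun hij => h i j hij e⟩
  rw [this]
  exact isOpen_iInter_of_finite fun i => isOpen_iInter_of_finite fun j =>
    isOpen_iInter_of_finite fun _ => isOpen_ne_fun (continuous_apply i) (continuous_apply j)

/-- **Mycielski.** For every positive `n` and every meager `M ⊆ (2^ω)^n` there is a perfect
`P ⊆ 2^ω` such that no `n`-tuple of pairwise distinct elements of `P` lies in `M`;
in particular `[P]^n` avoids `M`. -/
theorem mycielski (n : ℕ) (hn : 0 < n) (M : Set (Fin n → Cantor)) (hM : IsMeagre M) :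
    ∃ P : Set Cantor, PerfectSet P ∧
      ∀ X : Fin n → Cantor, (∀ i, X i ∈ P) → Function.Injective X → X ∉ M := by
  obtain ⟨𝒰, hUo, hUd, hUc, hUM⟩ := mem_residual_iff.1 hM
  let := metrizableSpaceMetric (Fin n → Cantor)
  obtain ⟨S, hSc, hSinj, hSU, -⟩ := (isOpen_injective n).exists_iUnion_isClosed
  have : Countable 𝒰 := hUc
  have : Countable (Clopens Cantor) := Clopens.countable_iff_secondCountable.2 inferInstance
  have h1 : ∀ᶠ K in residual (Compacts Cantor), ∀ (U : 𝒰) (m : ℕ),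
      ∀ Z : Fin n → Cantor, (∀ i, Z i ∈ K) → Z ∈ S m → Z ∈ U.1 := by
    simp only [eventually_countable_forall]
    intro U m
    refine residual_of_dense_open (isOpen_avoid (hUo _ U.2) (hSc m)) (Dense.mono ?_
      (dense_avoid (residual_of_dense_open (hUo _ U.2) (hUd _ U.2))))
    exact fun K hK Z hZ hS => hK Z hZ (hSinj m hS)
  have h2 : ∀ᶠ K in residual (Compacts Cantor), ∀ C : Clopens Cantor,
      ∀ x ∈ K, x ∈ C → ∃ y ∈ K, y ∈ C ∧ y ≠ x := by
    rw [eventually_countable_forall]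
    exact fun C => residual_of_dense_open (isOpen_split C.isClopen) (dense_split C.isClopen.isOpen)
  -- The empty set is an isolated point of the hyperspace, so nonemptiness of the generic `K` is
  -- imposed as an additional open condition.
  obtain ⟨K, hKne, hK1, hK2⟩ := (dense_of_mem_residual (h1.and h2)).inter_open_nonempty _
    (Compacts.isOpen_inter_nonempty_of_isOpen isOpen_univ) ⟨{fun _ => false}, fun _ => false, rfl, trivial⟩
  refine ⟨K, ⟨⟨K.isCompact.isClosed, preperfect_iff_nhds.2 fun x hx V hV => ?_⟩,
    hKne.mono Set.inter_subset_left⟩, fun X hX hinj => ?_⟩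
  · obtain ⟨C, ⟨hxC, hC⟩, hCV⟩ := (nhds_basis_clopen x).mem_iff.1 hV
    obtain ⟨y, hyK, hyC, hyx⟩ := hK2 ⟨C, hC⟩ x hx hxC
    exact ⟨y, ⟨hCV hyC, hyK⟩, hyx⟩
  · obtain ⟨m, hm⟩ := Set.mem_iUnion.1 (hSU.symm ▸ hinj : X ∈ ⋃ m, S m)
    exact hUM fun U hU => hK1 ⟨U, hU⟩ m X hX hm
end

section
/- Let n ≤ 3, let l ∈ ω, and let T ⊆ 2^ω be a perfect subset. Then for every Baire measurable coloring c : [T]^n → l there exists a perfect subset P ⊆ T such that the restriction of c to [P]^n_⪯ is constant for every total order ⪯ on {1,...,n-1}. -/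
/-!
Let `c` be a Baire measurable colouring of `[T]^n`. Mycielski's argument (`mycielski`,
`locally_constant`) gives a perfect `P ⊆ T` on whose tuples `c` is locally constant: the comeagre
set on which the pieces of `c` are relatively open contains all tuples of distinct points of a
suitable fusion. For `n ≤ 1` a small cone of `P` is already homogeneous.

For a locally constant colouring of pairs (`pairs`) some colour is dense below a cone: each of its
subcones contains a pair of that colour. A fusion that always splits a leaf along such a pair gives
a homogeneous perfect set.

For `n = 3`, two of the three points of a triple split later than the third point splits from
them; write the triple as `(x, y, z)` with `y < z` the close points (`Close x y z`). The two orders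
`⪯` on `{1, 2}` correspond to `x` lying to the left or to the right of `y` and `z`. The main step
(`end_homogeneous`) is a perfect set on which the colour of `(x, y, z)` does not depend on `z`, so
that it is a function `g x y`. For this, fix for every point `p` a sequence of pairs `y < z`
converging to `p` and let `e x p` be the limit along an ultrafilter of the colours of `(x, y, z)`
(`exists_limit_colour`): finitely many `x` can be handled by one pair `y < z` arbitrarily close to
`p`. In a fusion, every leaf `j` carries a
set of possible limit points `p`, nonmeagre in every subcone of the leaf, and for every other leaf
`i` a colour `c i j` such that, for all these `p`, the points `x` with `e x p = c i j` are dense in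
leaf `i`. To split leaf `j`, take such a `p`, points `x` of limit colour `c i j` in the other leaves
and a pair `y < z` close to `p` realizing all these colours; by local constancy the colours persist
when the leaves are shrunk around these points. The countable pigeonhole principle for nonmeagre
sets (`pigeon`) then refines the sets of limit points and provides colours for the new pairs of
leaves (`exists_next`).

Finally `pairs`, applied to the locally constant colouring `x < y ↦ (g x y, g y x)`, makes the two
components constant; they are the colours of the two types of triples (`galvin_three`).
-/

open Set

namespace Galvin

/-- `Agr n x y`: the points `x` and `y` have the same initial segment of length `n`, i.e. `y` lies
in the cone of depth `n` around `x`. -/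
def Agr (n : ℕ) (x y : Cantor) : Prop := ∀ r < n, x r = y r

lemma Agr.refl (n : ℕ) (x : Cantor) : Agr n x x := fun _ _ => rfl

lemma Agr.symm {n : ℕ} {x y : Cantor} (h : Agr n x y) : Agr n y x := fun r hr => (h r hr).symm

lemma Agr.trans {n : ℕ} {x y z : Cantor} (h : Agr n x y) (h' : Agr n y z) : Agr n x z :=
  fun r hr => (h r hr).trans (h' r hr)

lemma Agr.mono {n m : ℕ} {x y : Cantor} (h : Agr n x y) (hm : m ≤ n) : Agr m x y :=
  fun r hr => h r (by omega)

lemma split_ne {x y : Cantor} (h : x ≠ y) : x (splitLevel x y) ≠ y (splitLevel x y) := by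
  unfold splitLevel
  rw [dif_neg h]
  exact Nat.find_spec (Function.ne_iff.mp h)

lemma split_agr (x y : Cantor) : Agr (splitLevel x y) x y := by
  intro r hr
  unfold splitLevel at hr
  split_ifs at hr with h
  · omega
  · by_contra hne
    exact absurd (Nat.find_min' (Function.ne_iff.mp h) hne) (by omega)

lemma split_eq {x y : Cantor} {s : ℕ} (ha : Agr s x y) (hs : x s ≠ y s) : splitLevel x y = s := by
  have h : x ≠ y := fun h => hs (by rw [h])
  rcases lt_trichotomy (splitLevel x y) s with h1 | h1 | h1
  · exact absurd (ha _ h1) (split_ne h)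
  · exact h1
  · exact absurd (split_agr x y _ h1) hs

lemma le_split {x y : Cantor} {n : ℕ} (h : x ≠ y) (ha : Agr n x y) : n ≤ splitLevel x y := by
  by_contra hlt
  exact split_ne h (ha _ (by omega))

lemma split_lt {x y : Cantor} {n : ℕ} (ha : ¬ Agr n x y) : splitLevel x y < n := by
  by_contra hlt
  exact ha ((split_agr x y).mono (by omega))

lemma split_comm (x y : Cantor) : splitLevel x y = splitLevel y x := by
  by_cases h : x = y
  · rw [h]
  · exact split_eq (split_agr y x).symm (split_ne (Ne.symm h)).symm

lemma clex.vals {x y : Cantor} (h : clex x y) :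
    x (splitLevel x y) = false ∧ y (splitLevel x y) = true := by
  have h1 := split_ne h.1
  rw [h.2] at h1
  refine ⟨h.2, ?_⟩
  revert h1
  cases y (splitLevel x y) <;> simp

lemma clex_of {x y : Cantor} {s : ℕ} (ha : Agr s x y) (hx : x s = false) (hy : y s = true) :
    clex x y := by
  have hs : x s ≠ y s := by rw [hx, hy]; simp
  refine ⟨fun h => hs (by rw [h]), ?_⟩
  rw [split_eq ha hs]; exact hx

lemma clex_total {x y : Cantor} (h : x ≠ y) : clex x y ∨ clex y x := by
  cases hx : x (splitLevel x y) with
  | false => exact Or.inl ⟨h, hx⟩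
  | true =>
    refine Or.inr ⟨h.symm, ?_⟩
    have := split_ne h
    rw [split_comm]
    revert this; rw [hx]
    cases y (splitLevel x y) <;> simp

/-- Moving two points inside cones deeper than their splitting level changes neither that level
nor their order. -/
lemma clex.congr {x y x' y' : Cantor} {n : ℕ} (h : clex x y) (hn : splitLevel x y < n)
    (hx : Agr n x x') (hy : Agr n y y') :
    clex x' y' ∧ splitLevel x' y' = splitLevel x y := by
  have hv := clex.vals h
  have ha : Agr (splitLevel x y) x' y' :=
    ((hx.mono hn.le).symm.trans (split_agr x y)).trans (hy.mono hn.le)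
  have h1 : x' (splitLevel x y) = false := by rw [← hx _ hn]; exact hv.1
  have h2 : y' (splitLevel x y) = true := by rw [← hy _ hn]; exact hv.2
  exact ⟨clex_of ha h1 h2, split_eq ha (by rw [h1, h2]; simp)⟩

lemma clex_asymm {x y : Cantor} (h : clex x y) : ¬ clex y x := by
  intro h'
  have h1 := clex.vals h
  have h2 := clex.vals h'
  rw [split_comm y x] at h2
  rw [h1.1] at h2
  simp at h2

lemma clex_trans {x y z : Cantor} (h : clex x y) (h' : clex y z) : clex x z := by
  have h1 := clex.vals h
  have h2 := clex.vals h'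
  have a1 := split_agr x y
  have a2 := split_agr y z
  rcases lt_trichotomy (splitLevel x y) (splitLevel y z) with hl | hl | hl
  · refine clex_of (a1.trans (a2.mono hl.le)) h1.1 ?_
    rw [← a2 _ hl]; exact h1.2
  · rw [hl] at h1
    simp [h1.2] at h2
  · refine clex_of ((a1.mono hl.le).trans a2) ?_ h2.2
    rw [a1 _ hl]; exact h2.1

/-! ### Cones and the topology of the Cantor space -/

lemma isOpen_cone (x : Cantor) (n : ℕ) : IsOpen {y | Agr n x y} := by
  have : {y | Agr n x y} = PiNat.cylinder (E := fun _ => Bool) x n := by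
    ext y; simp only [PiNat.mem_cylinder_iff]
    exact ⟨fun h i hi => (h i hi).symm, fun h i hi => (h i hi).symm⟩
  rw [this]
  exact PiNat.isOpen_cylinder _ _ _

lemma isClosed_cone (x : Cantor) (n : ℕ) : IsClosed {y | Agr n x y} := by
  have : {y | Agr n x y} = ⋂ r : ℕ, ⋂ _ : r < n, {y : Cantor | x r = y r} := by
    ext y; simp [Agr]
  rw [this]
  exact isClosed_iInter fun r => isClosed_iInter fun _ =>
    isClosed_eq continuous_const (continuous_apply r)

lemma exists_cone_subset {x : Cantor} {U : Set Cantor} (hU : IsOpen U) (hx : x ∈ U) :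
    ∃ n, ∀ y, Agr n x y → y ∈ U := by
  obtain ⟨t, ⟨z, n, rfl⟩, hxt, htU⟩ :=
    (PiNat.isTopologicalBasis_cylinders (fun _ => Bool)).exists_subset_of_mem_open hx hU
  refine ⟨n, fun y hy => htU ?_⟩
  rw [PiNat.mem_cylinder_iff] at hxt ⊢
  intro i hi
  rw [← hxt i hi]; exact (hy i hi).symm

/-- `T` is closed and each cone around a point of `T` holds another point of `T`. -/
structure Perf (T : Set Cantor) : Prop where
  closed : IsClosed T
  nonempty : T.Nonempty
  near : ∀ x ∈ T, ∀ n, ∃ y ∈ T, y ≠ x ∧ Agr n x y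

lemma perf_iff {T : Set Cantor} : PerfectSet T ↔ Perf T := by
  constructor
  · rintro ⟨⟨hc, ha⟩, hn⟩
    refine ⟨hc, hn, fun x hx n => ?_⟩
    obtain ⟨y, ⟨hy1, hy2⟩, hy3⟩ := accPt_iff_nhds.mp (ha x hx) {y | Agr n x y}
      ((isOpen_cone x n).mem_nhds (Agr.refl n x))
    exact ⟨y, hy2, hy3, hy1⟩
  · rintro ⟨hc, hn, ha⟩
    refine ⟨⟨hc, fun x hx => ?_⟩, hn⟩
    rw [accPt_iff_nhds]
    intro U hU
    obtain ⟨V, hVU, hV, hxV⟩ := mem_nhds_iff.mp hU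
    obtain ⟨n, hn⟩ := exists_cone_subset hV hxV
    obtain ⟨y, hy, hne, hag⟩ := ha x hx n
    exact ⟨y, ⟨hVU (hn y hag), hy⟩, hne⟩

lemma Perf.pair {T : Set Cantor} (hT : Perf T) {x : Cantor} (hx : x ∈ T) (n : ℕ) :
    ∃ y ∈ T, ∃ z ∈ T, Agr n x y ∧ Agr n x z ∧ clex y z := by
  obtain ⟨y, hy, hne, ha⟩ := hT.near x hx n
  rcases clex_total hne with h | h
  · exact ⟨y, hy, x, hx, ha, Agr.refl _ _, h⟩
  · exact ⟨x, hx, y, hy, Agr.refl _ _, ha, h⟩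

lemma Perf.cone {T : Set Cantor} (hT : Perf T) {a : Cantor} (ha : a ∈ T) (m : ℕ) :
    Perf (T ∩ {x | Agr m a x}) := by
  refine ⟨hT.closed.inter (isClosed_cone a m), ⟨a, ha, Agr.refl _ _⟩, ?_⟩
  rintro x ⟨hx, hxa⟩ n
  obtain ⟨y, hy, hne, hag⟩ := hT.near x hx (max n m)
  exact ⟨y, ⟨hy, Agr.trans hxa (hag.mono (le_max_right _ _))⟩, hne, hag.mono (le_max_left _ _)⟩

/-! ### Fusion -/

/-- The leaf that is split at stage `k`; every leaf is split infinitely often. -/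
def idx (k : ℕ) : ℕ := (Nat.unpair k).1

lemma idx_le (k : ℕ) : idx k ≤ k := Nat.unpair_left_le k

lemma exists_idx (j k : ℕ) : ∃ k', k ≤ k' ∧ idx k' = j :=
  ⟨Nat.pair j k, Nat.right_le_pair j k, by simp [idx]⟩

/-- The stage-`k` leaf below which the stage-`(k+1)` leaf `j` lies. -/
def par (k j : ℕ) : ℕ := if j = k + 1 then idx k else j

lemma par_le {k j : ℕ} (h : j ≤ k + 1) : par k j ≤ k := by
  unfold par; split_ifs
  · exact idx_le k
  · omega

/-- The cones of depth `m` around `a 0, …, a k` are pairwise disjoint. -/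
def Sep (k : ℕ) (a : ℕ → Cantor) (m : ℕ) : Prop :=
  ∀ i ≤ k, ∀ j ≤ k, i ≠ j → ¬ Agr m (a i) (a j)

/-- At stage `k` the leaves are the cones of depth `m` around `a 0, …, a k`. In passing to stage
`k + 1` the leaf `idx k` is replaced by two leaves with indices `idx k` and `k + 1`, in this
lexicographic order, and every other leaf shrinks. -/
structure Step (k : ℕ) (a : ℕ → Cantor) (m : ℕ) (a' : ℕ → Cantor) (m' : ℕ) : Prop where
  lt : m < m'
  old : ∀ j ≤ k, Agr m (a j) (a' j)
  new : Agr m (a (idx k)) (a' (k + 1))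
  lex : clex (a' (idx k)) (a' (k + 1))
  split : splitLevel (a' (idx k)) (a' (k + 1)) < m'

lemma Step.par {k m m' : ℕ} {a a' : ℕ → Cantor} (h : Step k a m a' m') {j : ℕ} (hj : j ≤ k + 1) :
    Agr m (a (par k j)) (a' j) := by
  unfold Galvin.par; split_ifs with h1
  · rw [h1]; exact h.new
  · exact h.old j (by omega)

lemma par_eq {k i j : ℕ} (hi : i ≤ k + 1) (hj : j ≤ k + 1) (hij : i ≠ j)
    (h : par k i = par k j) : (i = idx k ∧ j = k + 1) ∨ (i = k + 1 ∧ j = idx k) := by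
  unfold par at h
  split_ifs at h <;> omega

lemma Step.sep {k m m' : ℕ} {a a' : ℕ → Cantor} (h : Step k a m a' m') (hs : Sep k a m) :
    Sep (k + 1) a' m' := by
  intro i hi j hj hij hag
  by_cases hp : Galvin.par k i = Galvin.par k j
  · have hne : ¬ Agr m' (a' (idx k)) (a' (k + 1)) := by
      intro hag'
      have := le_split h.lex.1 hag'
      have := h.split
      omega
    rcases par_eq hi hj hij hp with ⟨rfl, rfl⟩ | ⟨rfl, rfl⟩
    · exact hne hag
    · exact hne hag.symm
  · exact hs _ (par_le hi) _ (par_le hj) hp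
      (((h.par hi).trans (hag.mono h.lt.le)).trans (h.par hj).symm)

lemma Sep.unique {k m i j : ℕ} {a : ℕ → Cantor} (hs : Sep k a m) (hi : i ≤ k) (hj : j ≤ k)
    {x : Cantor} (hxi : Agr m (a i) x) (hxj : Agr m (a j) x) : i = j := by
  by_contra hij
  exact hs i hi j hj hij (hxi.trans hxj.symm)

lemma exists_stages {σ : Type*} (Inv : ℕ → σ → Prop) (Rel : ℕ → σ → σ → Prop) (s₀ : σ)
    (h₀ : Inv 0 s₀) (step : ∀ k s, Inv k s → ∃ s', Inv (k + 1) s' ∧ Rel k s s') :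
    ∃ f : ℕ → σ, f 0 = s₀ ∧ ∀ k, Inv k (f k) ∧ Rel k (f k) (f (k + 1)) := by
  choose g hg1 hg2 using step
  let F : ∀ k, {s : σ // Inv k s} := fun k =>
    Nat.rec (motive := fun k => {s : σ // Inv k s}) ⟨s₀, h₀⟩
      (fun k s => ⟨g k s.1 s.2, hg1 k s.1 s.2⟩) k
  exact ⟨fun k => (F k).1, rfl, fun k => ⟨(F k).2, hg2 k (F k).1 (F k).2⟩⟩

/-- A fusion sequence inside `T`. -/
structure Fusion (T : Set Cantor) (a : ℕ → ℕ → Cantor) (m : ℕ → ℕ) : Prop where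
  perf : Perf T
  mem : ∀ k j, a k j ∈ T
  step : ∀ k, Step k (a k) (m k) (a (k + 1)) (m (k + 1))

/-- The limit of a fusion sequence: the points of `T` lying in some leaf at every stage. -/
def limSet (T : Set Cantor) (a : ℕ → ℕ → Cantor) (m : ℕ → ℕ) : Set Cantor :=
  {x | x ∈ T ∧ ∀ k, ∃ j ≤ k, Agr (m k) (a k j) x}

namespace Fusion

variable {T : Set Cantor} {a : ℕ → ℕ → Cantor} {m : ℕ → ℕ}

lemma sep (h : Fusion T a m) (k : ℕ) : Sep k (a k) (m k) := by
  induction k with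
  | zero => intro i hi j hj hij; omega
  | succ k ih => exact (h.step k).sep ih

lemma m_mono (h : Fusion T a m) : StrictMono m := strictMono_nat_of_lt_succ fun k => (h.step k).lt

lemma le_m (h : Fusion T a m) (k : ℕ) : k ≤ m k := h.m_mono.le_apply

lemma agr_add (h : Fusion T a m) {k j : ℕ} (hj : j ≤ k) (d : ℕ) :
    Agr (m k) (a k j) (a (k + d) j) := by
  induction d with
  | zero => exact Agr.refl _ _
  | succ d ih =>
    exact ih.trans (((h.step (k + d)).old j (by omega)).mono (h.m_mono.monotone (by omega)))

/-- Each leaf contains a point of the limit. -/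
lemma exists_mem (h : Fusion T a m) {k j : ℕ} (hj : j ≤ k) :
    ∃ x ∈ limSet T a m, Agr (m k) (a k j) x := by
  have hne : (⋂ d : ℕ, T ∩ {x | Agr (m (k + d)) (a (k + d) j) x}).Nonempty := by
    apply IsCompact.nonempty_iInter_of_sequence_nonempty_isCompact_isClosed
    · rintro d x ⟨hx, hxa⟩
      refine ⟨hx, ?_⟩
      exact ((h.step (k + d)).old j (by omega)).trans
        (Agr.mono hxa (h.step (k + d)).lt.le)
    · exact fun d => ⟨a (k + d) j, h.mem _ _, Agr.refl _ _⟩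
    · exact (h.perf.closed.inter (isClosed_cone _ _)).isCompact
    · exact fun d => h.perf.closed.inter (isClosed_cone _ _)
  obtain ⟨x, hx⟩ := hne
  rw [mem_iInter] at hx
  have h0 : Agr (m k) (a k j) x := (hx 0).2
  -- at an earlier stage `k'` the point lies in the ancestor leaf
  have down : ∀ d k', k' + d = k → ∃ i ≤ k', Agr (m k') (a k' i) x := by
    intro d
    induction d with
    | zero => rintro k' rfl; exact ⟨j, hj, h0⟩
    | succ d ih =>
      intro k' hk'
      obtain ⟨i, hi, hix⟩ := ih (k' + 1) (by omega)
      exact ⟨par k' i, par_le hi, ((h.step k').par hi).trans (hix.mono (h.step k').lt.le)⟩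
  refine ⟨x, ⟨(hx 0).1, fun k' => ?_⟩, h0⟩
  rcases le_total k k' with hk | hk
  · obtain ⟨d, rfl⟩ := Nat.exists_eq_add_of_le hk
    exact ⟨j, by omega, (hx d).2⟩
  · exact down (k - k') k' (by omega)

lemma perf_lim (h : Fusion T a m) : Perf (limSet T a m) := by
  refine ⟨?_, ?_, ?_⟩
  · have : limSet T a m = T ∩ ⋂ k, ⋃ j ∈ Finset.range (k + 1), {x | Agr (m k) (a k j) x} := by
      ext x; simp [limSet]
    rw [this]
    exact h.perf.closed.inter (isClosed_iInter fun k =>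
      isClosed_biUnion_finset fun j _ => isClosed_cone _ _)
  · obtain ⟨x, hx, -⟩ := h.exists_mem (le_refl 0)
    exact ⟨x, hx⟩
  · intro x hx n
    obtain ⟨j, hj, hjx⟩ := hx.2 n
    obtain ⟨k, hk, rfl⟩ := exists_idx j n
    have key : ∀ i ≤ k + 1, Agr (m k) (a k (idx k)) (a (k + 1) i) →
        ∀ y, Agr (m (k + 1)) (a (k + 1) i) y → Agr n x y := by
      intro i hi hai y hy
      obtain ⟨d, rfl⟩ := Nat.exists_eq_add_of_le hk
      have h1 := (h.agr_add hj d).mono (h.le_m n)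
      have h2 : n ≤ m (n + d) := (h.le_m n).trans (h.m_mono.monotone (by omega))
      exact ((hjx.mono (h.le_m n)).symm.trans h1).trans
        ((hai.mono h2).trans (hy.mono (h2.trans (h.step _).lt.le)))
    have hik := idx_le k
    obtain ⟨y, hy, hya⟩ := h.exists_mem (k := k + 1) (j := idx k) (by omega)
    obtain ⟨z, hz, hza⟩ := h.exists_mem (k := k + 1) (j := k + 1) le_rfl
    by_cases hyx : y = x
    · refine ⟨z, hz, ?_, key _ le_rfl (h.step k).new z hza⟩
      rintro rfl
      subst hyx
      have := (h.sep (k + 1)).unique (by omega) le_rfl hya hza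
      omega
    · exact ⟨y, hy, hyx, key _ (by omega) ((h.step k).old _ hik) y hya⟩

/-- Two points of the limit are separated at a unique stage `k`, when the leaf `idx k` containing
both of them is split. -/
lemma exists_split (h : Fusion T a m) {y z : Cantor} (hy : y ∈ limSet T a m) (hz : z ∈ limSet T a m)
    (hyz : clex y z) : ∃ k,
      Agr (m k) (a k (idx k)) y ∧ Agr (m k) (a k (idx k)) z ∧
      Agr (m (k + 1)) (a (k + 1) (idx k)) y ∧ Agr (m (k + 1)) (a (k + 1) (k + 1)) z := by
  classical
  have hex : ∃ k, ¬ ∃ j ≤ k, Agr (m k) (a k j) y ∧ Agr (m k) (a k j) z := by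
    refine ⟨splitLevel y z + 1, ?_⟩
    rintro ⟨j, -, h1, h2⟩
    have := le_split hyz.1 (h1.symm.trans h2)
    have := h.le_m (splitLevel y z + 1)
    omega
  have h0 : Nat.find hex ≠ 0 := by
    intro h0
    refine Nat.find_spec hex ?_
    rw [h0]
    obtain ⟨j, hj, hjy⟩ := hy.2 0
    obtain ⟨j', hj', hjz⟩ := hz.2 0
    obtain rfl : j = 0 := by omega
    obtain rfl : j' = 0 := by omega
    exact ⟨0, le_rfl, hjy, hjz⟩
  obtain ⟨k, hk⟩ := Nat.exists_eq_succ_of_ne_zero h0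
  have hspec := Nat.find_spec hex
  have hmin := Nat.find_min hex (m := k) (by omega)
  rw [hk] at hspec
  push Not at hmin
  obtain ⟨j, hj, hjy, hjz⟩ := hmin
  obtain ⟨p, hp, hpy⟩ := hy.2 (k + 1)
  obtain ⟨q, hq, hqz⟩ := hz.2 (k + 1)
  have hpq : p ≠ q := by rintro rfl; exact hspec ⟨p, hp, hpy, hqz⟩
  have hlt := (h.step k).lt.le
  have h1 : par k p = j := (h.sep k).unique (par_le hp) hj
    (((h.step k).par hp).trans (hpy.mono hlt)) hjy
  have h2 : par k q = j := (h.sep k).unique (par_le hq) hj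
    (((h.step k).par hq).trans (hqz.mono hlt)) hjz
  have hidx : j = idx k := by
    rcases par_eq hp hq hpq (h1.trans h2.symm) with ⟨rfl, rfl⟩ | ⟨rfl, rfl⟩
    · rw [← h2, par, if_pos rfl]
    · rw [← h1, par, if_pos rfl]
  subst hidx
  rcases par_eq hp hq hpq (h1.trans h2.symm) with ⟨rfl, rfl⟩ | ⟨rfl, rfl⟩
  · exact ⟨k, hjy, hjz, hpy, hqz⟩
  · exfalso
    exact clex_asymm hyz (clex.congr (h.step k).lex (h.step k).split hqz hpy).1

end Fusion

lemma Step.shrink {k m m' m'' : ℕ} {a a' a'' : ℕ → Cantor} (h : Step k a m a' m')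
    (hm : m' ≤ m'') (ha : ∀ j ≤ k + 1, Agr m' (a' j) (a'' j)) : Step k a m a'' m'' := by
  have hk := idx_le k
  have hc := clex.congr h.lex h.split (ha (idx k) (by omega)) (ha (k + 1) le_rfl)
  refine ⟨h.lt.trans_le hm, fun j hj => (h.old j hj).trans ((ha j (by omega)).mono h.lt.le),
    h.new.trans ((ha _ le_rfl).mono h.lt.le), hc.1, ?_⟩
  rw [hc.2]; exact h.split.trans_le hm

lemma exists_step {T : Set Cantor} (k m : ℕ) {a : ℕ → Cantor} (ha : ∀ j, a j ∈ T) {y z : Cantor}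
    (hy : y ∈ T) (hz : z ∈ T) (hay : Agr m (a (idx k)) y) (haz : Agr m (a (idx k)) z)
    (hyz : clex y z) : ∃ a' m', (∀ j, a' j ∈ T) ∧ Step k a m a' m' ∧
      a' (idx k) = y ∧ a' (k + 1) = z ∧ ∀ j, j ≠ idx k → j ≠ k + 1 → a' j = a j := by
  have hk := idx_le k
  have h1 : idx k ≠ k + 1 := by omega
  refine ⟨fun j => if j = idx k then y else if j = k + 1 then z else a j,
    max (m + 1) (splitLevel y z + 1), fun j => ?_, ⟨?_, fun j hj => ?_, ?_, ?_, ?_⟩, ?_, ?_,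
    fun j h2 h3 => ?_⟩
  · show (if j = idx k then y else if j = k + 1 then z else a j) ∈ T
    split_ifs
    exacts [hy, hz, ha j]
  · exact lt_of_lt_of_le (Nat.lt_succ_self m) (le_max_left _ _)
  · show Agr m (a j) (if j = idx k then y else if j = k + 1 then z else a j)
    split_ifs with h2 h3
    · rw [h2]; exact hay
    · omega
    · exact Agr.refl _ _
  · simpa [h1.symm] using haz
  · simpa [h1.symm] using hyz
  · simp [h1.symm]
  · simp
  · simp [h1.symm]
  · simp [h2, h3]

/-! ### Tuples in a residual set -/

lemma cone_prod {n : ℕ} {T : Set Cantor} {O : Set (Tuples n T)} (hO : IsOpen O)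
    {X : Tuples n T} (hX : X ∈ O) :
    ∃ M, ∀ Y : Tuples n T, (∀ r, Agr M (X.1 r) (Y.1 r)) → Y ∈ O := by
  obtain ⟨V, hV, rfl⟩ := isOpen_induced_iff.mp hO
  obtain ⟨U, hU, hUV⟩ := isOpen_pi_iff'.mp hV X.1 hX
  choose N hN using fun r => exists_cone_subset (hU r).1 (hU r).2
  refine ⟨Finset.univ.sup N, fun Y hY => hUV ?_⟩
  intro r _
  exact hN r _ ((hY r).mono (Finset.le_sup (f := N) (Finset.mem_univ r)))

/-- Finitely many products of distinct leaves can be shrunk into given dense open sets. -/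
lemma shrink_finset {n : ℕ} {T : Set Cantor} (O : ℕ → Set (Tuples n T))
    (hO : ∀ i, IsOpen (O i)) (hD : ∀ i, Dense (O i)) {a : ℕ → Cantor} (ha : ∀ j, a j ∈ T) (m : ℕ)
    (F : Finset (ℕ × (Fin n → ℕ))) :
    ∃ (a' : ℕ → Cantor) (m' : ℕ), m ≤ m' ∧ (∀ j, a' j ∈ T) ∧ (∀ j, Agr m (a j) (a' j)) ∧
      ∀ q ∈ F, Function.Injective q.2 → ∀ X : Tuples n T,
        (∀ r, Agr m' (a' (q.2 r)) (X.1 r)) → X ∈ O q.1 := by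
  classical
  induction F using Finset.induction_on with
  | empty => exact ⟨a, m, le_rfl, ha, fun j => Agr.refl _ _, by simp⟩
  | insert q F _ ih =>
    obtain ⟨b, p, hmp, hb, hab, hF⟩ := ih
    by_cases hex : Function.Injective q.2 ∧ ∃ X : Tuples n T, ∀ r, Agr p (b (q.2 r)) (X.1 r)
    · obtain ⟨hinj, X₀, hX₀⟩ := hex
      have hop : IsOpen {X : Tuples n T | ∀ r, Agr p (b (q.2 r)) (X.1 r)} := by
        simp only [ofPred_forall]
        refine isOpen_iInter_of_finite fun r => ?_
        have hcont : Continuous fun X : Tuples n T => X.1 r :=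
          (continuous_apply r).comp continuous_subtype_val
        exact (isOpen_cone (b (q.2 r)) p).preimage hcont
      obtain ⟨X, hXp, hXO⟩ := (hD q.1).inter_open_nonempty _ hop ⟨X₀, hX₀⟩
      obtain ⟨M, hM⟩ := cone_prod (hO q.1) hXO
      -- move the leaves of `q` to the coordinates of `X`
      let b' : ℕ → Cantor := fun j => if h : ∃ r, q.2 r = j then X.1 h.choose else b j
      have hb'1 : ∀ r, b' (q.2 r) = X.1 r := by
        intro r
        have h : ∃ r', q.2 r' = q.2 r := ⟨r, rfl⟩
        have : h.choose = r := hinj h.choose_spec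
        simp only [b', dif_pos h, this]
      have hb'2 : ∀ j, Agr p (b j) (b' j) := by
        intro j
        by_cases h : ∃ r, q.2 r = j
        · obtain ⟨r, rfl⟩ := h
          rw [hb'1]; exact hXp r
        · simp only [b', dif_neg h]; exact Agr.refl _ _
      refine ⟨b', max p M, hmp.trans (le_max_left _ _), fun j => ?_, fun j =>
        (hab j).trans ((hb'2 j).mono hmp), fun q' hq' hinj' Y hY => ?_⟩
      · by_cases h : ∃ r, q.2 r = j
        · obtain ⟨r, rfl⟩ := h
          rw [hb'1]; exact X.2.1 r
        · simp only [b', dif_neg h]; exact hb j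
      · rcases Finset.mem_insert.mp hq' with rfl | hq'
        · refine hM Y fun r => ?_
          rw [← hb'1]
          exact (hY r).mono (le_max_right _ _)
        · exact hF q' hq' hinj' Y fun r =>
            (hb'2 _).trans ((hY r).mono (le_max_left _ _))
    · refine ⟨b, p, hmp, hb, hab, fun q' hq' hinj' Y hY => ?_⟩
      rcases Finset.mem_insert.mp hq' with rfl | hq'
      · exact absurd ⟨hinj', Y, hY⟩ hex
      · exact hF q' hq' hinj' Y hY

/-- Mycielski's theorem for increasing tuples: all increasing tuples from a suitable perfect subset
lie in a given residual set. -/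
theorem mycielski {n : ℕ} {T : Set Cantor} (hT : Perf T) {G : Set (Tuples n T)}
    (hG : G ∈ residual (Tuples n T)) :
    ∃ P ⊆ T, Perf P ∧ ∀ X : Tuples n T, (∀ r, X.1 r ∈ P) → X ∈ G := by
  obtain ⟨S, hSo, hSd, hSc, hSG⟩ := mem_residual_iff.mp hG
  obtain ⟨O, hOS⟩ := (hSc.insert univ).exists_eq_range (insert_nonempty _ _)
  have hO : ∀ i, IsOpen (O i) ∧ Dense (O i) := by
    intro i
    have : O i ∈ insert univ S := by rw [hOS]; exact mem_range_self i
    rcases mem_insert_iff.mp this with h | h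
    · rw [h]; exact ⟨isOpen_univ, dense_univ⟩
    · exact ⟨hSo _ h, hSd _ h⟩
  obtain ⟨a₀, ha₀⟩ := hT.nonempty
  obtain ⟨f, -, hf⟩ := exists_stages (σ := (ℕ → Cantor) × ℕ) (fun _ s => ∀ j, s.1 j ∈ T)
    (fun k s s' => Step k s.1 s.2 s'.1 s'.2 ∧ ∀ i ≤ k, ∀ τ : Fin n → ℕ, (∀ r, τ r ≤ k + 1) →
      Function.Injective τ → ∀ X : Tuples n T, (∀ r, Agr s'.2 (s'.1 (τ r)) (X.1 r)) → X ∈ O i)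
    (fun _ => a₀, 0) (fun _ => ha₀) (by
      rintro k ⟨a, m⟩ ha
      obtain ⟨y, hy, z, hz, hay, haz, hyz⟩ := hT.pair (ha (idx k)) m
      obtain ⟨b, p, hb, hst, -⟩ := exists_step k m ha hy hz hay haz hyz
      obtain ⟨c, q, hpq, hc, hbc, hF⟩ := shrink_finset O (fun i => (hO i).1) (fun i => (hO i).2)
        hb p (Finset.range (k + 1) ×ˢ Fintype.piFinset fun _ : Fin n => Finset.range (k + 2))
      refine ⟨(c, q), hc, hst.shrink hpq fun j _ => hbc j, fun i hi τ hτ hinj X hX => ?_⟩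
      refine hF (i, τ) ?_ hinj X hX
      simp only [Finset.mem_product, Finset.mem_range, Fintype.mem_piFinset]
      exact ⟨by omega, fun r => by have := hτ r; omega⟩)
  have hfu : Fusion T (fun k => (f k).1) (fun k => (f k).2) :=
    ⟨hT, fun k j => (hf k).1 j, fun k => (hf k).2.1⟩
  refine ⟨_, fun x hx => hx.1, hfu.perf_lim, fun X hX => hSG ?_⟩
  have : ∀ i, X ∈ O i := by
    intro i
    -- a stage so late that distinct coordinates of `X` lie in distinct leaves
    let N := Finset.univ.sup fun p : Fin n × Fin n => splitLevel (X.1 p.1) (X.1 p.2)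
    have hN : ∀ r s, splitLevel (X.1 r) (X.1 s) ≤ N := fun r s =>
      Finset.le_sup (f := fun p : Fin n × Fin n => splitLevel (X.1 p.1) (X.1 p.2))
        (Finset.mem_univ (r, s))
    choose τ hτ hτX using fun r => (hX r).2 (max i N + 1)
    refine (hf (max i N)).2.2 i (le_max_left _ _) τ hτ ?_ X hτX
    intro r s hrs
    by_contra hne
    have hXne : X.1 r ≠ X.1 s := by
      rcases lt_or_gt_of_ne hne with h | h
      · exact (X.2.2 r s h).1
      · exact (X.2.2 s r h).1.symm
    have h1 := hτX r
    rw [hrs] at h1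
    have h2 : (f (max i N + 1)).2 ≤ splitLevel (X.1 r) (X.1 s) :=
      le_split hXne (h1.symm.trans (hτX s))
    have h3 : max i N + 1 ≤ (f (max i N + 1)).2 := hfu.le_m (max i N + 1)
    have h4 := hN r s
    have h5 : N ≤ max i N := le_max_right i N
    omega
  rintro s hs
  obtain ⟨i, rfl⟩ : s ∈ range O := by rw [← hOS]; exact mem_insert_of_mem _ hs
  exact this i

/-- On a suitable perfect subset, a Baire measurable colouring of the increasing tuples is locally
constant. -/
theorem locally_constant {n l : ℕ} {T : Set Cantor} (hT : Perf T) (c : Tuples n T → Fin l)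
    (hc : BaireMeasurableFun c) :
    ∃ P ⊆ T, Perf P ∧ ∀ X : Tuples n T, (∀ r, X.1 r ∈ P) → ∃ M, ∀ Y : Tuples n T,
      (∀ r, Y.1 r ∈ P) → (∀ r, Agr M (X.1 r) (Y.1 r)) → c Y = c X := by
  have h1 : ∀ v : Fin l, ∃ U : Set (Tuples n T), IsOpen U ∧
      Filter.EventuallyEq (residual _) (c ⁻¹' {v}) U := fun v =>
    (hc {v} (isOpen_discrete _)).residualEq_isOpen
  choose U hUo hUe using h1
  have hG : {X | ∀ v, X ∈ c ⁻¹' {v} ↔ X ∈ U v} ∈ residual (Tuples n T) := by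
    have := Filter.eventually_all.mpr fun v => Filter.eventuallyEq_set.mp (hUe v)
    exact this
  obtain ⟨P, hPT, hP, hPG⟩ := mycielski hT hG
  refine ⟨P, hPT, hP, fun X hX => ?_⟩
  obtain ⟨M, hM⟩ := cone_prod (hUo (c X)) ((hPG X hX (c X)).mp rfl)
  exact ⟨M, fun Y hY hXY => (hPG Y hY (c X)).mpr (hM Y hXY)⟩

/-! ### Locally constant colourings of pairs -/

/-- If each cone of `T` witnesses one of finitely many colours, and witnesses persist in larger
cones, then some colour is witnessed in every cone below a fixed one. -/
lemma frequent_colour {K : Type*} [Finite K] {T : Set Cantor} (Q : K → Cantor → ℕ → Prop)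
    (hmono : ∀ v b b' n n', Agr n b b' → n ≤ n' → Q v b' n' → Q v b n)
    (hex : ∀ b ∈ T, ∀ n, ∃ v, Q v b n) {a : Cantor} (ha : a ∈ T) (m : ℕ) :
    ∃ v, ∃ b ∈ T, Agr m a b ∧ ∃ n, m ≤ n ∧ ∀ b' ∈ T, Agr n b b' → ∀ n', Q v b' n' := by
  classical
  have := Fintype.ofFinite K
  by_contra hcon
  push Not at hcon
  -- otherwise the colours can be avoided one after the other
  have hS : ∀ S : Finset K, ∃ b ∈ T, Agr m a b ∧ ∃ n, m ≤ n ∧ ∀ v ∈ S, ¬ Q v b n := by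
    intro S
    induction S using Finset.induction_on with
    | empty => exact ⟨a, ha, Agr.refl _ _, m, le_rfl, by simp⟩
    | insert v S _ ih =>
      obtain ⟨b, hb, hab, n, hmn, hS⟩ := ih
      obtain ⟨b', hb', hbb', n', hn'⟩ := hcon v b hb hab n hmn
      refine ⟨b', hb', hab.trans (hbb'.mono hmn), max n n', hmn.trans (le_max_left _ _),
        fun w hw hQ => ?_⟩
      rcases Finset.mem_insert.mp hw with rfl | hw
      · exact hn' (hmono _ _ _ _ _ (Agr.refl _ _) (le_max_right _ _) hQ)
      · exact hS w hw (hmono _ _ _ _ _ hbb' (le_max_left _ _) hQ)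
  obtain ⟨b, hb, -, n, -, hn⟩ := hS Finset.univ
  obtain ⟨v, hv⟩ := hex b hb n
  exact hn v (Finset.mem_univ v) hv

/-- A locally constant colouring of increasing pairs is constant on a perfect subset. -/
theorem pairs {K : Type*} [Finite K] {T : Set Cantor} (hT : Perf T) (g : Cantor → Cantor → K)
    (hg : ∀ x ∈ T, ∀ y ∈ T, clex x y → ∃ M, ∀ x' ∈ T, ∀ y' ∈ T, Agr M x x' → Agr M y y' →
      g x' y' = g x y) :
    ∃ P ⊆ T, Perf P ∧ ∃ v, ∀ x ∈ P, ∀ y ∈ P, clex x y → g x y = v := by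
  obtain ⟨a, ha⟩ := hT.nonempty
  obtain ⟨v, a₀, ha₀, -, m₀, -, hv⟩ := frequent_colour (T := T)
    (fun (v : K) b n => ∃ x ∈ T, ∃ y ∈ T, Agr n b x ∧ Agr n b y ∧ clex x y ∧ g x y = v)
    (by
      rintro v b b' n n' hbb' hn ⟨x, hx, y, hy, hbx, hby, hxy, hv⟩
      exact ⟨x, hx, y, hy, hbb'.trans (hbx.mono hn), hbb'.trans (hby.mono hn), hxy, hv⟩)
    (by
      intro b hb n
      obtain ⟨y, hy, z, hz, hby, hbz, hyz⟩ := hT.pair hb n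
      exact ⟨_, y, hy, z, hz, hby, hbz, hyz, rfl⟩) ha 0
  have hT' := hT.cone ha₀ m₀
  set T' := T ∩ {x | Agr m₀ a₀ x} with hT'def
  obtain ⟨f, -, hf⟩ := exists_stages (σ := (ℕ → Cantor) × ℕ) (fun _ s => ∀ j, s.1 j ∈ T')
    (fun k s s' => Step k s.1 s.2 s'.1 s'.2 ∧ ∀ x ∈ T', ∀ y ∈ T', Agr s'.2 (s'.1 (idx k)) x →
      Agr s'.2 (s'.1 (k + 1)) y → g x y = v)
    (fun _ => a₀, 0) (fun _ => ⟨ha₀, Agr.refl _ _⟩) (by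
      rintro k ⟨a, m⟩ ha
      obtain ⟨y, hy, z, hz, hay, haz, hyz, hgv⟩ := hv _ (ha (idx k)).1 (ha (idx k)).2 (max m m₀)
      have hy' : y ∈ T' := ⟨hy, Agr.trans (ha (idx k)).2 (hay.mono (le_max_right _ _))⟩
      have hz' : z ∈ T' := ⟨hz, Agr.trans (ha (idx k)).2 (haz.mono (le_max_right _ _))⟩
      obtain ⟨b, p, hb, hst, hby, hbz, -⟩ := exists_step k m ha hy' hz'
        (hay.mono (le_max_left _ _)) (haz.mono (le_max_left _ _)) hyz
      obtain ⟨M, hM⟩ := hg y hy z hz hyz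
      refine ⟨(b, max p M), hb, hst.shrink (le_max_left _ _) fun j _ => Agr.refl _ _,
        fun x hx y' hy' h1 h2 => ?_⟩
      simp only [hby, hbz] at h1 h2
      rw [← hgv]
      exact hM x hx.1 y' hy'.1 (h1.mono (le_max_right _ _)) (h2.mono (le_max_right _ _)))
  have hfu : Fusion T' (fun k => (f k).1) (fun k => (f k).2) :=
    ⟨hT', fun k j => (hf k).1 j, fun k => (hf k).2.1⟩
  refine ⟨_, fun x hx => hx.1.1, hfu.perf_lim, v, fun x hx y hy hxy => ?_⟩
  obtain ⟨k, -, -, h1, h2⟩ := hfu.exists_split hx hy hxy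
  exact (hf k).2.2 x hx.1 y hy.1 h1 h2

/-! ### Baire category in a perfect set -/

/-- `S ∩ T` is meagre in the space `T`. -/
def Meag (T S : Set Cantor) : Prop := IsMeagre ((↑) ⁻¹' S : Set T)

lemma Meag.mono {T S S' : Set Cantor} (h : Meag T S) (hS : S' ⊆ S) : Meag T S' :=
  IsMeagre.mono (preimage_mono hS) h

lemma Meag.iUnion {T : Set Cantor} {ι : Type*} [Countable ι] {S : ι → Set Cantor}
    (h : ∀ i, Meag T (S i)) : Meag T (⋃ i, S i) := by
  unfold Meag
  rw [preimage_iUnion]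
  exact isMeagre_iUnion h

/-- `A` is nonmeagre in every subcone of the cone of depth `m` around `a`. -/
def EvPos (T A : Set Cantor) (a : Cantor) (m : ℕ) : Prop :=
  ∀ b ∈ T, Agr m a b → ∀ n, ¬ Meag T (A ∩ {x | Agr n b x})

lemma EvPos.shrink {T A : Set Cantor} {a b : Cantor} {m n : ℕ} (h : EvPos T A a m)
    (hab : Agr m a b) (hmn : m ≤ n) : EvPos T A b n :=
  fun c hc hbc => h c hc (hab.trans (hbc.mono hmn))

lemma exists_mem_of_not_meag {T S : Set Cantor} (h : ¬ Meag T S) : ∃ x ∈ T, x ∈ S := by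
  obtain ⟨x, hx⟩ := nonempty_of_not_isMeagre h
  exact ⟨x.1, x.2, hx⟩

lemma Perf.evPos {T : Set Cantor} (hT : Perf T) (a : Cantor) : EvPos T T a 0 := by
  intro b hb _ n hM
  have := isCompact_iff_compactSpace.mp hT.closed.isCompact
  refine not_isMeagre_of_isOpen ((isOpen_cone b n).preimage continuous_subtype_val)
    ⟨(⟨b, hb⟩ : T), Agr.refl _ _⟩ (IsMeagre.mono ?_ hM)
  exact fun x hx => ⟨x.2, hx⟩

/-- The cone of depth `n` around `x`, recorded as an element of a countable type. -/
def code (n : ℕ) (x : Cantor) : Σ n : ℕ, (Fin n → Bool) := ⟨n, fun r => x r⟩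

lemma code_inj {n n' : ℕ} {x x' : Cantor} (h : code n x = code n' x') : n = n' ∧ Agr n x x' := by
  unfold code at h
  obtain ⟨rfl, h⟩ := Sigma.mk.inj_iff.mp h
  exact ⟨rfl, fun r hr => congrFun (eq_of_heq h) ⟨r, hr⟩⟩

/-- A set that is nonmeagre in a cone is nonmeagre everywhere in some subcone. -/
lemma localize {T A : Set Cantor} {a : Cantor} {m : ℕ} (h : ¬ Meag T (A ∩ {x | Agr m a x})) :
    ∃ b ∈ T, Agr m a b ∧ ∃ n, m ≤ n ∧ EvPos T A b n := by
  by_contra hcon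
  push Not at hcon
  let W : Set Cantor := {x | ∃ n, Meag T (A ∩ {y | Agr n x y})}
  have hWo : IsOpen W := by
    rw [isOpen_iff_forall_mem_open]
    rintro x ⟨n, hn⟩
    refine ⟨{y | Agr n x y}, fun y hy => ⟨n, hn.mono ?_⟩, isOpen_cone x n, Agr.refl _ _⟩
    exact fun z hz => ⟨hz.1, Agr.trans hy hz.2⟩
  have hAW : Meag T (A ∩ W) := by
    refine Meag.mono (Meag.iUnion (S := fun s : Σ n : ℕ, (Fin n → Bool) =>
      {x | x ∈ A ∧ ∃ n, Meag T (A ∩ {y | Agr n x y}) ∧ code n x = s}) fun s => ?_) ?_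
    · by_cases hne : ∃ x₀ n, Meag T (A ∩ {y | Agr n x₀ y}) ∧ code n x₀ = s
      · obtain ⟨x₀, n, hM, rfl⟩ := hne
        refine hM.mono ?_
        rintro x ⟨hxA, n', -, hc⟩
        obtain ⟨rfl, hag⟩ := code_inj hc
        exact ⟨hxA, hag.symm⟩
      · refine Meag.mono (S := ∅) ?_ ?_
        · unfold Meag; rw [preimage_empty]; exact IsMeagre.empty
        · rintro x ⟨-, n, hM, hc⟩
          exact hne ⟨x, n, hM, hc⟩
    · rintro x ⟨hxA, n, hM⟩
      exact mem_iUnion.mpr ⟨code n x, hxA, n, hM, rfl⟩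
  have hD : Meag T ({x | Agr m a x} \ W) := by
    have hcl : IsClosed ((↑) ⁻¹' ({x | Agr m a x} \ W) : Set T) :=
      ((isClosed_cone a m).sdiff hWo).preimage continuous_subtype_val
    refine IsNowhereDense.isMeagre (hcl.isNowhereDense_iff.mpr ?_)
    rw [eq_empty_iff_forall_notMem]
    intro t ht
    obtain ⟨V, hVs, hV, htV⟩ := mem_interior.mp ht
    obtain ⟨U, hU, rfl⟩ := isOpen_induced_iff.mp hV
    obtain ⟨N, hN⟩ := exists_cone_subset hU htV
    have hta : Agr m a t.1 := (hVs htV).1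
    have hne := hcon t.1 t.2 hta (max m N) (le_max_left _ _)
    unfold EvPos at hne
    push Not at hne
    obtain ⟨b, hb, htb, n, hM⟩ := hne
    have hbU : b ∈ U := hN b (htb.mono (le_max_right _ _))
    exact (hVs (show (⟨b, hb⟩ : T) ∈ (↑) ⁻¹' U from hbU)).2 ⟨n, hM⟩
  refine h (Meag.mono (S := (A ∩ W) ∪ ({x | Agr m a x} \ W)) ?_ ?_)
  · exact IsMeagre.union hAW hD
  · rintro x ⟨hxA, hxa⟩
    by_cases hxW : x ∈ W
    · exact Or.inl ⟨hxA, hxW⟩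
    · exact Or.inr ⟨hxa, hxW⟩

/-! ### End-homogeneous perfect sets -/

/-- The points of colour `u` under `d` are dense in the cone of depth `m` around `z`. -/
def DenseCol {K : Type*} (T : Set Cantor) (d : Cantor → K) (z : Cantor) (m : ℕ) (u : K) : Prop :=
  ∀ b ∈ T, Agr m z b → ∀ n, ∃ x ∈ T, Agr n b x ∧ d x = u

lemma DenseCol.shrink {K : Type*} {T : Set Cantor} {d : Cantor → K} {z z' : Cantor} {m m' : ℕ}
    {u : K} (h : DenseCol T d z m u) (hz : Agr m z z') (hm : m ≤ m') : DenseCol T d z' m' u :=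
  fun b hb hzb => h b hb (hz.trans (hzb.mono hm))

/-- Each `p` determines a colour that is dense in some subcone of the cone around `z`; there are
only countably many possible outcomes, so one of them is shared by nonmeagrely many `p ∈ A`. -/
lemma pigeon {K : Type*} [Finite K] {T A : Set Cantor} (e : Cantor → Cantor → K) {y z : Cantor}
    {M : ℕ} (hA : EvPos T A y M) (hy : y ∈ T) (hz : z ∈ T) :
    ∃ y' ∈ T, Agr M y y' ∧ ∃ z' ∈ T, Agr M z z' ∧ ∃ M', M ≤ M' ∧ ∃ u, ∃ A' ⊆ A,
      EvPos T A' y' M' ∧ ∀ p ∈ A', DenseCol T (fun x => e x p) z' M' u := by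
  have hc : ∀ p, ∃ v, ∃ b ∈ T, Agr M z b ∧ ∃ n, M ≤ n ∧ DenseCol T (fun x => e x p) b n v := by
    intro p
    refine frequent_colour (fun (v : K) b n => ∃ x ∈ T, Agr n b x ∧ e x p = v) ?_ ?_ hz M
    · rintro v b b' n n' hbb' hn ⟨x, hx, hbx, hv⟩
      exact ⟨x, hx, hbb'.trans (hbx.mono hn), hv⟩
    · exact fun b hb n => ⟨_, b, hb, Agr.refl _ _, rfl⟩
  choose v b hbT hzb n hMn hd using hc
  have hex : ∃ s : (Σ n : ℕ, (Fin n → Bool)) × K,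
      ¬ Meag T ({p | p ∈ A ∧ (code (n p) (b p), v p) = s} ∩ {x | Agr M y x}) := by
    by_contra hcon
    push Not at hcon
    refine hA y hy (Agr.refl _ _) M ((Meag.iUnion hcon).mono ?_)
    rintro p ⟨hpA, hpy⟩
    exact mem_iUnion.mpr ⟨_, ⟨hpA, rfl⟩, hpy⟩
  obtain ⟨s, hs⟩ := hex
  obtain ⟨p₀, -, ⟨-, rfl⟩, -⟩ := exists_mem_of_not_meag hs
  obtain ⟨y', hy', hyy', n', hn', hpos⟩ := localize hs
  refine ⟨y', hy', hyy', b p₀, hbT p₀, hzb p₀, max n' (n p₀), hn'.trans (le_max_left _ _), v p₀, _,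
    fun p hp => hp.1, hpos.shrink (Agr.refl _ _) (le_max_left _ _), ?_⟩
  rintro p ⟨-, hp⟩
  obtain ⟨h1, h2⟩ : code (n p) (b p) = code (n p₀) (b p₀) ∧ v p = v p₀ := Prod.ext_iff.mp hp
  obtain ⟨h3, h4⟩ := code_inj h1
  rw [← h2]
  exact (hd p).shrink h4 (h3.le.trans (le_max_right _ _))

/-- The limit colour `e x p` of the triples `(x, y, z)` along an ultrafilter of increasing pairs
`(y, z)` converging to `(p, p)`. Finitely many limit colours with the same `p` are realized
simultaneously by a pair arbitrarily close to `p`. -/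
lemma exists_limit_colour {K : Type*} [Finite K] {T : Set Cantor} (hT : Perf T)
    (h : Cantor → Cantor → Cantor → K) :
    ∃ e : Cantor → Cantor → K, ∀ p ∈ T, ∀ m, ∀ F : Finset Cantor, ∃ y ∈ T, ∃ z ∈ T,
      Agr m p y ∧ Agr m p z ∧ clex y z ∧ ∀ x ∈ F, h x y z = e x p := by
  have hex : ∀ p n, ∃ y z, p ∈ T → (y ∈ T ∧ z ∈ T ∧ Agr n p y ∧ Agr n p z ∧ clex y z) := by
    intro p n
    by_cases hp : p ∈ T
    · obtain ⟨y, hy, z, hz, h1, h2, h3⟩ := hT.pair hp n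
      exact ⟨y, z, fun _ => ⟨hy, hz, h1, h2, h3⟩⟩
    · exact ⟨p, p, fun h => absurd h hp⟩
  choose Y Z hYZ using hex
  have hlim : ∀ x p, ∃ v, ∀ᶠ n in (Filter.hyperfilter ℕ : Filter ℕ), h x (Y p n) (Z p n) = v := by
    intro x p
    obtain ⟨v, hv⟩ :=
      ((Filter.hyperfilter ℕ).map fun n => h x (Y p n) (Z p n)).eq_pure_of_finite
    refine ⟨v, ?_⟩
    have : {v} ∈ (Filter.hyperfilter ℕ).map fun n => h x (Y p n) (Z p n) := by
      rw [hv]; exact mem_singleton v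
    exact this
  choose e he using hlim
  refine ⟨e, fun p hp m F => ?_⟩
  have h1 : ∀ᶠ n in (Filter.hyperfilter ℕ : Filter ℕ),
      ∀ x ∈ F, h x (Y p n) (Z p n) = e x p :=
    (Filter.eventually_all_finset F).mpr fun x _ => he x p
  have h2 : ∀ᶠ n in (Filter.hyperfilter ℕ : Filter ℕ), m ≤ n :=
    (Filter.eventually_ge_atTop m).filter_mono Nat.hyperfilter_le_atTop
  obtain ⟨n, hn1, hn2⟩ := (h1.and h2).exists
  obtain ⟨hy, hz, ha, hb, hc⟩ := hYZ p n hp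
  exact ⟨_, hy, _, hz, ha.mono hn2, hb.mono hn2, hc, hn1⟩

/-- `y < z` are closer to each other than to `x`. -/
def Close (x y z : Cantor) : Prop := x ≠ y ∧ splitLevel x y < splitLevel y z ∧ clex y z

lemma close_of {m : ℕ} {x y z : Cantor} (hxy : ¬ Agr m x y) (hyz : Agr m y z) (h : clex y z) :
    Close x y z :=
  ⟨fun he => hxy (he ▸ Agr.refl _ _), (split_lt hxy).trans_le (le_split h.1 hyz), h⟩

/-- A stage of the construction: the leaves `a j` (of depth `m`), a set `A j` of possible limit
points in each leaf, and for each pair of leaves the colour `c i j` that is to be given to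
triples with one point in leaf `i` and two points in leaf `j`. -/
structure Stage (K : Type*) where
  a : ℕ → Cantor
  m : ℕ
  A : ℕ → Set Cantor
  c : ℕ → ℕ → K

/-- The invariant of the construction: for every `p ∈ A j` the limit colour `c i j` is dense in
leaf `i`. -/
structure Inv {K : Type*} (T : Set Cantor) (e : Cantor → Cantor → K) (k : ℕ) (s : Stage K) :
    Prop where
  mem : ∀ j, s.a j ∈ T
  sep : Sep k s.a s.m
  pos : ∀ j ≤ k, EvPos T (s.A j) (s.a j) s.m
  col : ∀ i ≤ k, ∀ j ≤ k, i ≠ j → ∀ p ∈ s.A j, DenseCol T (fun x => e x p) (s.a i) s.m (s.c i j)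

/-- The relation between consecutive stages: colours are inherited by smaller leaves, and triples
with two points in the leaf that is being split get the colour that has been decided for them. -/
structure Rel {K : Type*} (T : Set Cantor) (h : Cantor → Cantor → Cantor → K) (k : ℕ)
    (s s' : Stage K) : Prop where
  step : Step k s.a s.m s'.a s'.m
  inh : ∀ i j, par k i ≠ par k j → s'.c i j = s.c (par k i) (par k j)
  hom : ∀ j ≤ k, j ≠ idx k → ∀ x ∈ T, ∀ y ∈ T, ∀ z ∈ T, Agr s'.m (s'.a j) x →
    Agr s'.m (s'.a (idx k)) y → Agr s'.m (s'.a (k + 1)) z → h x y z = s.c j (idx k)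

lemma exists_next {K : Type*} [Finite K] {T : Set Cantor}
    {h : Cantor → Cantor → Cantor → K}
    (hloc : ∀ x ∈ T, ∀ y ∈ T, ∀ z ∈ T, Close x y z → ∃ M, ∀ x' ∈ T, ∀ y' ∈ T, ∀ z' ∈ T,
      Agr M x x' → Agr M y y' → Agr M z z' → h x' y' z' = h x y z)
    {e : Cantor → Cantor → K}
    (he : ∀ p ∈ T, ∀ m, ∀ F : Finset Cantor, ∃ y ∈ T, ∃ z ∈ T,
      Agr m p y ∧ Agr m p z ∧ clex y z ∧ ∀ x ∈ F, h x y z = e x p)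
    (k : ℕ) (s : Stage K) (hs : Inv T e k s) : ∃ s', Inv T e (k + 1) s' ∧ Rel T h k s s' := by
  classical
  obtain ⟨a, m, A, c⟩ := s
  obtain ⟨hmem, hsep, hpos, hcol⟩ := hs
  dsimp only at hmem hsep hpos hcol
  have hik : idx k ≤ k := idx_le k
  obtain ⟨i, hi⟩ : ∃ i, idx k = i := ⟨_, rfl⟩
  rw [hi] at hik
  have hik' : i ≠ k + 1 := by omega
  -- a limit point `p` in the leaf to be split, and points of the right limit colour elsewhere
  obtain ⟨p, hpT, hpA, hap⟩ := exists_mem_of_not_meag (hpos i hik (a i) (hmem i) (Agr.refl _ _) m)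
  have hx : ∀ j, ∃ x ∈ T, Agr m (a j) x ∧ (j ≤ k → j ≠ i → e x p = c j i) := by
    intro j
    by_cases hj : j ≤ k ∧ j ≠ i
    · obtain ⟨x, hx, h1, h2⟩ := hcol j hj.1 i hik hj.2 p hpA (a j) (hmem j) (Agr.refl _ _) m
      exact ⟨x, hx, h1, fun _ _ => h2⟩
    · exact ⟨a j, hmem j, Agr.refl _ _, fun h1 h2 => absurd ⟨h1, h2⟩ hj⟩
  choose x hxT hax hxe using hx
  obtain ⟨y, hy, z, hz, hpy, hpz, hyz, hF⟩ := he p hpT m ((Finset.range (k + 1)).image x)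
  have hay : Agr m (a i) y := Agr.trans hap hpy
  have haz : Agr m (a i) z := Agr.trans hap hpz
  obtain ⟨b, q, hbT, hst, hby, hbz, hbj⟩ := exists_step k m hxT hy hz
    (by rw [hi]; exact (hax i).symm.trans hay) (by rw [hi]; exact (hax i).symm.trans haz) hyz
  rw [hi] at hby hbj
  replace hst : Step k a m b q :=
    ⟨hst.lt, fun j hj => (hax j).trans (hst.old j hj), (hax _).trans hst.new, hst.lex, hst.split⟩
  -- a depth `q'` below which these triples keep their colours
  have hM : ∀ j, ∃ M, j ≤ k → j ≠ i → ∀ x' ∈ T, ∀ y' ∈ T, ∀ z' ∈ T,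
      Agr M (x j) x' → Agr M y y' → Agr M z z' → h x' y' z' = c j i := by
    intro j
    by_cases hj : j ≤ k ∧ j ≠ i
    · have hcl : Close (x j) y z := by
        refine close_of (m := m) (fun hag => ?_) (hpy.symm.trans hpz) hyz
        exact hsep j hj.1 i hik hj.2 (((hax j).trans hag).trans hay.symm)
      obtain ⟨M, hM⟩ := hloc _ (hxT j) y hy z hz hcl
      refine ⟨M, fun _ _ x' hx' y' hy' z' hz' h1 h2 h3 => ?_⟩
      rw [hM x' hx' y' hy' z' hz' h1 h2 h3, ← hxe j hj.1 hj.2]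
      exact hF _ (Finset.mem_image_of_mem x (Finset.mem_range.mpr (by omega)))
    · exact ⟨0, fun h1 h2 => absurd ⟨h1, h2⟩ hj⟩
  choose M hM using hM
  let q' := max q ((Finset.range (k + 1)).sup M)
  have hqq' : q ≤ q' := le_max_left _ _
  have hMq' : ∀ j ≤ k, M j ≤ q' := fun j hj =>
    (Finset.le_sup (f := M) (Finset.mem_range.mpr (by omega))).trans (le_max_right _ _)
  have hmq' : m ≤ q' := hqq'.trans' hst.lt.le
  -- decide the colours between the two new leaves
  obtain ⟨y₁, hy₁, hyy₁, z₁, hz₁, hzz₁, M₁, hM₁, u, A₁, hA₁, hp₁, hd₁⟩ :=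
    pigeon e ((hpos i hik).shrink hay hmq') hy hz
  obtain ⟨z₂, hz₂, hzz₂, y₂, hy₂, hyy₂, M₂, hM₂, w, A₂, hA₂, hp₂, hd₂⟩ :=
    pigeon e ((hpos i hik).shrink (haz.trans (hzz₁.mono hmq')) (hmq'.trans hM₁)) hz₁ hy₁
  have hyy : Agr q' y y₂ := hyy₁.trans (hyy₂.mono hM₁)
  have hzz : Agr q' z z₂ := hzz₁.trans (hzz₂.mono hM₁)
  have hqM : q' ≤ M₂ := hM₁.trans hM₂
  obtain ⟨a', ha'⟩ : ∃ a' : ℕ → Cantor, a' = fun j => if j = i then y₂ else if j = k + 1 then z₂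
    else b j := ⟨_, rfl⟩
  have ha'i : a' i = y₂ := by simp [ha']
  have ha'k : a' (k + 1) = z₂ := by simp [ha', hik'.symm]
  have ha'j : ∀ j, j ≠ i → j ≠ k + 1 → a' j = b j := fun j h1 h2 => by simp [ha', h1, h2]
  have hba' : ∀ j, Agr q' (b j) (a' j) := by
    intro j
    by_cases h1 : j = i
    · subst h1; rw [ha'i, hby]; exact hyy
    · by_cases h2 : j = k + 1
      · subst h2; rw [ha'k, hbz]; exact hzz
      · rw [ha'j j h1 h2]; exact Agr.refl _ _
  have hst' : Step k a m a' M₂ :=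
    hst.shrink (hqq'.trans hqM) fun j _ => (hba' j).mono hqq'
  obtain ⟨A', hA'⟩ : ∃ A' : ℕ → Set Cantor, A' = fun j => if j = i then A₁ else
    if j = k + 1 then A₂ else A j := ⟨_, rfl⟩
  have hA'i : A' i = A₁ := by simp [hA']
  have hA'k : A' (k + 1) = A₂ := by simp [hA', hik'.symm]
  have hA'j : ∀ j, j ≠ i → j ≠ k + 1 → A' j = A j := fun j h1 h2 => by simp [hA', h1, h2]
  have hpari : par k i = i := by simp [par, hik']
  have hpark : par k (k + 1) = i := by simp [par, hi]
  have hparj : ∀ j, j ≠ k + 1 → par k j = j := fun j hj => by simp [par, hj]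
  have hA'sub : ∀ j, A' j ⊆ A (par k j) := by
    intro j
    by_cases h1 : j = i
    · subst h1; rw [hA'i, hpari]; exact hA₁
    · by_cases h2 : j = k + 1
      · subst h2; rw [hA'k, hpark]; exact hA₂
      · rw [hA'j j h1 h2, hparj j h2]
  refine ⟨⟨a', M₂, A', fun r s => if par k r = par k s then (if r = i then w else u)
    else c (par k r) (par k s)⟩, ⟨?_, hst'.sep hsep, ?_, ?_⟩, ⟨hst', ?_, ?_⟩⟩
  · intro j
    dsimp only
    by_cases h1 : j = i
    · subst h1; rw [ha'i]; exact hy₂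
    · by_cases h2 : j = k + 1
      · subst h2; rw [ha'k]; exact hz₂
      · rw [ha'j j h1 h2]; exact hbT j
  · intro j hj
    dsimp only
    by_cases h1 : j = i
    · subst h1; rw [ha'i, hA'i]; exact hp₁.shrink hyy₂ hM₂
    · by_cases h2 : j = k + 1
      · subst h2; rw [ha'k, hA'k]; exact hp₂
      · rw [hA'j j h1 h2]
        exact (hpos j (by omega)).shrink (hst'.old j (by omega)) hst'.lt.le
  · intro r hr s hs hrs p' hp'
    dsimp only at hp' ⊢
    split_ifs with h1 h2
    · rcases par_eq hr hs hrs h1 with ⟨h3, h4⟩ | ⟨h3, h4⟩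
      · rw [h4, hA'k] at hp'
        rw [h2, ha'i]
        exact hd₂ p' hp'
      · omega
    · rcases par_eq hr hs hrs h1 with ⟨h3, h4⟩ | ⟨h3, h4⟩
      · omega
      · rw [h4, hi, hA'i] at hp'
        rw [h3, ha'k]
        exact (hd₁ p' hp').shrink hzz₂ hM₂
    · exact (hcol _ (par_le hr) _ (par_le hs) h1 p' (hA'sub s hp')).shrink (hst'.par hr) hst'.lt.le
  · intro r s hrs
    exact if_neg hrs
  · intro j hj hji x' hx' y' hy' z' hz' h1 h2 h3
    dsimp only at h1 h2 h3 ⊢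
    rw [hi] at hji h2 ⊢
    rw [ha'i] at h2
    rw [ha'k] at h3
    rw [ha'j j hji (by omega), hbj j hji (by omega)] at h1
    have hj' : M j ≤ q' := hMq' j hj
    exact hM j hj hji x' hx' y' hy' z' hz' (h1.mono (hj'.trans hqM))
      ((hyy.trans (h2.mono hqM)).mono hj') ((hzz.trans (h3.mono hqM)).mono hj')

/-- For a locally constant colouring `h` of triples there is a perfect subset on which the colour
of `(x, y, z)`, with `y` and `z` closer to each other than to `x`, depends on `x` and `y` only, in
a locally constant way. -/
theorem end_homogeneous {K : Type*} [Finite K] {T : Set Cantor} (hT : Perf T)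
    (h : Cantor → Cantor → Cantor → K)
    (hloc : ∀ x ∈ T, ∀ y ∈ T, ∀ z ∈ T, Close x y z → ∃ M, ∀ x' ∈ T, ∀ y' ∈ T, ∀ z' ∈ T,
      Agr M x x' → Agr M y y' → Agr M z z' → h x' y' z' = h x y z) :
    ∃ P ⊆ T, Perf P ∧ ∃ g : Cantor → Cantor → K,
      (∀ x ∈ P, ∀ y ∈ P, x ≠ y → ∃ M, ∀ x' ∈ P, ∀ y' ∈ P, Agr M x x' → Agr M y y' →
        g x' y' = g x y) ∧
      ∀ x ∈ P, ∀ y ∈ P, ∀ z ∈ P, Close x y z → h x y z = g x y := by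
  classical
  obtain ⟨e, he⟩ := exists_limit_colour hT h
  obtain ⟨a₀, ha₀⟩ := hT.nonempty
  obtain ⟨f, -, hf⟩ := exists_stages (Inv T e) (Rel T h)
    ⟨fun _ => a₀, 0, fun _ => T, fun _ _ => h a₀ a₀ a₀⟩
    ⟨fun _ => ha₀, fun i hi j hj hij => by omega, fun _ _ => hT.evPos a₀,
      fun i hi j hj hij => by omega⟩ (exists_next hloc he)
  have hfu : Fusion T (fun k => (f k).a) (fun k => (f k).m) :=
    ⟨hT, fun k j => (hf k).1.mem j, fun k => (hf k).2.step⟩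
  obtain ⟨P, hPdef⟩ : ∃ P, P = limSet T (fun k => (f k).a) (fun k => (f k).m) := ⟨_, rfl⟩
  -- `J k x` is the leaf containing `x` at stage `k`
  have hJ : ∀ k x, ∃ j, x ∈ P → j ≤ k ∧ Agr (f k).m ((f k).a j) x := by
    intro k x
    by_cases hx : x ∈ P
    · rw [hPdef] at hx
      obtain ⟨j, hj⟩ := hx.2 k
      exact ⟨j, fun _ => hj⟩
    · exact ⟨0, fun h => absurd h hx⟩
  choose J hJ using hJ
  have hJu : ∀ k, ∀ x ∈ P, ∀ j ≤ k, Agr (f k).m ((f k).a j) x → J k x = j := fun k x hx j hj hag =>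
    (hfu.sep k).unique (hJ k x hx).1 hj (hJ k x hx).2 hag
  have hJp : ∀ k, ∀ x ∈ P, par k (J (k + 1) x) = J k x := by
    intro k x hx
    have h1 := hJ (k + 1) x hx
    exact (hJu k x hx _ (par_le h1.1)
      (((hfu.step k).par h1.1).trans (h1.2.mono (hfu.step k).lt.le))).symm
  -- once two points are in distinct leaves, the colour of these leaves no longer changes
  have hconst : ∀ x ∈ P, ∀ y ∈ P, ∀ k, J k x ≠ J k y → ∀ k', k ≤ k' → J k' x ≠ J k' y ∧
      (f k').c (J k' x) (J k' y) = (f k).c (J k x) (J k y) := by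
    intro x hx y hy k hk k' hkk'
    induction k', hkk' using Nat.le_induction with
    | base => exact ⟨hk, rfl⟩
    | succ k' hkk' ih =>
      have h1 : par k' (J (k' + 1) x) ≠ par k' (J (k' + 1) y) := by
        rw [hJp k' x hx, hJp k' y hy]; exact ih.1
      refine ⟨fun h2 => h1 (by rw [h2]), ?_⟩
      rw [(hf k').2.inh _ _ h1, hJp k' x hx, hJp k' y hy]
      exact ih.2
  have hlate : ∀ x ∈ P, ∀ y ∈ P, x ≠ y → J (splitLevel x y + 1) x ≠ J (splitLevel x y + 1) y := by
    intro x hx y hy hxy heq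
    have h1 := (hJ (splitLevel x y + 1) x hx).2
    rw [heq] at h1
    have h2 := le_split hxy (h1.symm.trans (hJ _ y hy).2)
    have h3 : splitLevel x y + 1 ≤ (f (splitLevel x y + 1)).m := hfu.le_m _
    omega
  have hPT : P ⊆ T := by rw [hPdef]; exact fun x hx => hx.1
  refine ⟨P, hPT, by rw [hPdef]; exact hfu.perf_lim,
    fun x y => (f (splitLevel x y + 1)).c (J (splitLevel x y + 1) x) (J (splitLevel x y + 1) y),
    ?_, ?_⟩
  · intro x hx y hy hxy
    refine ⟨(f (splitLevel x y + 1)).m, fun x' hx' y' hy' hxx' hyy' => ?_⟩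
    have h3 : splitLevel x y + 1 ≤ (f (splitLevel x y + 1)).m := hfu.le_m _
    have hsp : splitLevel x' y' = splitLevel x y := by
      refine split_eq (((hxx'.mono (by omega)).symm.trans (split_agr x y)).trans
        (hyy'.mono (by omega))) ?_
      rw [← hxx' _ (by omega), ← hyy' _ (by omega)]
      exact split_ne hxy
    have h1 := hJ (splitLevel x y + 1) x hx
    have h2 := hJ (splitLevel x y + 1) y hy
    dsimp only
    rw [hsp, hJu _ x' hx' _ h1.1 (h1.2.trans hxx'), hJu _ y' hy' _ h2.1 (h2.2.trans hyy')]
  · intro x hx y hy z hz hcl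
    obtain ⟨hxy, hlt, hyz⟩ := hcl
    obtain ⟨k, h1, h2, h3, h4⟩ := hfu.exists_split (hPdef ▸ hy) (hPdef ▸ hz) hyz
    have hik := idx_le k
    have hyk : J k y = idx k := hJu k y hy _ hik h1
    have hsp : splitLevel y z < (f (k + 1)).m := by
      rw [(clex.congr (hfu.step k).lex (hfu.step k).split h3 h4).2]
      exact (hfu.step k).split
    have hx1 := hJ (k + 1) x hx
    -- `x` is in another leaf than `y` and `z` when these two are separated
    have hne : J k x ≠ J k y := by
      intro heq
      have hpx : par k (J (k + 1) x) = idx k := by rw [hJp k x hx, heq, hyk]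
      by_cases hc : J (k + 1) x = k + 1
      · rw [hc] at hx1
        have hxz : Agr (f (k + 1)).m x z := hx1.2.symm.trans h4
        have : splitLevel x y = splitLevel y z := by
          refine split_eq ((hxz.mono hsp.le).trans (split_agr y z).symm) ?_
          rw [hxz _ hsp]
          exact (split_ne hyz.1).symm
        omega
      · have hc' : J (k + 1) x = idx k := by
          rw [← hpx, par, if_neg hc]
        rw [hc'] at hx1
        have := le_split hxy (hx1.2.symm.trans h3)
        omega
    have hpx : J (k + 1) x = J k x := by
      rw [← hJp k x hx, par, if_neg]
      intro hc
      refine hne ?_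
      rw [← hJp k x hx, hc, par, if_pos rfl, hyk]
    rw [hpx] at hx1
    rw [(hf k).2.hom (J k x) (hJ k x hx).1 (by rw [← hyk]; exact hne) x (hPT hx) y (hPT hy) z
      (hPT hz) hx1.2 h3 h4]
    show _ = (f (splitLevel x y + 1)).c (J (splitLevel x y + 1) x) (J (splitLevel x y + 1) y)
    rcases le_total k (splitLevel x y + 1) with hle | hle
    · rw [(hconst x hx y hy k hne _ hle).2, hyk]
    · rw [← (hconst x hx y hy _ (hlate x hx y hy hxy) _ hle).2, hyk]

/-! ### Galvin's theorem -/

lemma mem_tuples_three {T : Set Cantor} {x y z : Cantor} (hx : x ∈ T) (hy : y ∈ T) (hz : z ∈ T)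
    (hxy : clex x y) (hyz : clex y z) : ![x, y, z] ∈ Tuples 3 T := by
  refine ⟨fun i => ?_, fun i j hij => ?_⟩
  · fin_cases i <;> assumption
  · have hxz := clex_trans hxy hyz
    fin_cases i <;> fin_cases j <;> first | assumption | exact absurd hij (by decide)

lemma mem_tuples_two {T : Set Cantor} {x y : Cantor} (hx : x ∈ T) (hy : y ∈ T)
    (hxy : clex x y) : ![x, y] ∈ Tuples 2 T := by
  refine ⟨fun i => ?_, fun i j hij => ?_⟩
  · fin_cases i <;> assumption
  · fin_cases i <;> fin_cases j <;> first | assumption | exact absurd hij (by decide)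

lemma cdist_lt_iff {x y z w : Cantor} :
    cdist z w < cdist x y ↔ splitLevel x y < splitLevel z w := by
  unfold cdist
  rw [one_div_lt_one_div (by positivity) (by positivity)]
  simp

/-- If `x` branches off `y` before `z` does, and `y < z`, then `x` lies on one side of both. -/
lemma Close.lt_or_lt {x y z : Cantor} (h : Close x y z) :
    (clex x y ∧ clex y z) ∨ (clex y z ∧ clex z x ∧ ¬ clex x y) := by
  obtain ⟨hne, hlt, hyz⟩ := h
  rcases clex_total hne with h | h
  · exact Or.inl ⟨h, hyz⟩
  · rw [split_comm] at hlt
    have h1 := clex.congr h (Nat.lt_succ_self _) ((split_agr y z).mono hlt) (Agr.refl _ x)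
    exact Or.inr ⟨hyz, h1.1, clex_asymm h⟩

section

variable {l n : ℕ} {T P : Set Cantor}

/-- Local constancy of a colouring of `[T]^n` along the tuples of points of `P`. -/
def LocConst (c : Tuples n T → Fin l) (P : Set Cantor) : Prop :=
  ∀ X : Tuples n T, (∀ r, X.1 r ∈ P) → ∃ M, ∀ Y : Tuples n T, (∀ r, Y.1 r ∈ P) →
    (∀ r, Agr M (X.1 r) (Y.1 r)) → c Y = c X

lemma galvin_one {c : Tuples 1 T → Fin l} (hP : Perf P) (hPT : P ⊆ T) (hc : LocConst c P) :
    ∃ Q ⊆ P, Perf Q ∧ ∃ v, ∀ X : Tuples 1 T, (∀ r, X.1 r ∈ Q) → c X = v := by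
  obtain ⟨x, hx⟩ := hP.nonempty
  obtain ⟨M, hM⟩ := hc ⟨fun _ => x, fun _ => hPT hx, fun i j hij => absurd hij (by omega)⟩
    fun _ => hx
  exact ⟨_, inter_subset_left, hP.cone hx M, _, fun Y hY =>
    hM Y (fun r => (hY r).1) fun r => (hY r).2⟩

lemma galvin_two {c : Tuples 2 T → Fin l} (hP : Perf P) (hPT : P ⊆ T) (hc : LocConst c P) :
    ∃ Q ⊆ P, Perf Q ∧ ∃ v, ∀ X : Tuples 2 T, (∀ r, X.1 r ∈ Q) → c X = v := by
  classical
  obtain ⟨a, ha⟩ := hP.nonempty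
  obtain ⟨x₀, hx₀, y₀, hy₀, -, -, h₀⟩ := hP.pair ha 0
  let d := c ⟨_, mem_tuples_two (hPT hx₀) (hPT hy₀) h₀⟩
  obtain ⟨g, hg⟩ : ∃ g : Cantor → Cantor → Fin l, ∀ x y, ∀ h : ![x, y] ∈ Tuples 2 T,
      g x y = c ⟨_, h⟩ :=
    ⟨fun x y => if h : ![x, y] ∈ Tuples 2 T then c ⟨_, h⟩ else d, fun x y h => dif_pos h⟩
  obtain ⟨Q, hQP, hQ, v, hv⟩ := pairs hP g fun x hx y hy hxy => by
    obtain ⟨M, hM⟩ := hc ⟨_, mem_tuples_two (hPT hx) (hPT hy) hxy⟩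
      (by intro r; fin_cases r <;> assumption)
    refine ⟨max M (splitLevel x y + 1), fun x' hx' y' hy' hxx' hyy' => ?_⟩
    have h' := (clex.congr hxy (by omega) hxx' hyy').1
    rw [hg _ _ (mem_tuples_two (hPT hx) (hPT hy) hxy),
      hg _ _ (mem_tuples_two (hPT hx') (hPT hy') h')]
    refine hM _ (by intro r; fin_cases r <;> assumption) ?_
    intro r
    fin_cases r
    · exact hxx'.mono (le_max_left _ _)
    · exact hyy'.mono (le_max_left _ _)
  refine ⟨Q, hQP, hQ, v, fun X hX => ?_⟩
  have he : ![X.1 0, X.1 1] = X.1 := by ext1 r; fin_cases r <;> rfl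
  rw [← hv _ (hX 0) _ (hX 1) (X.2.2 0 1 (by decide)), hg _ _ (he ▸ X.2)]
  congr 1
  exact Subtype.ext he.symm

/-- The colour of a triple in `Q` depends only on which of its two gaps is the wider one: `v` is the
colour of the triples whose last two points are close, `w` that of the triples whose first two
points are close. -/
lemma galvin_three {c : Tuples 3 T → Fin l} (hP : Perf P) (hPT : P ⊆ T) (hc : LocConst c P) :
    ∃ Q ⊆ P, Perf Q ∧ ∃ v w, ∀ X : Tuples 3 T, (∀ r, X.1 r ∈ Q) →
      (splitLevel (X.1 0) (X.1 1) < splitLevel (X.1 1) (X.1 2) → c X = v) ∧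
      (splitLevel (X.1 1) (X.1 2) < splitLevel (X.1 0) (X.1 1) → c X = w) := by
  classical
  obtain ⟨a, ha⟩ := hP.nonempty
  obtain ⟨x₀, hx₀, b, hb, -, -, h₀⟩ := hP.pair ha 0
  obtain ⟨y₀, hy₀, z₀, hz₀, hby, -, h₁⟩ := hP.pair hb (splitLevel x₀ b + 1)
  have h₂ := (clex.congr h₀ (Nat.lt_succ_self _) (Agr.refl _ _) hby).1
  let d := c ⟨_, mem_tuples_three (hPT hx₀) (hPT hy₀) (hPT hz₀) h₂ h₁⟩
  obtain ⟨g, hg⟩ : ∃ g : Cantor → Cantor → Cantor → Fin l, ∀ x y z, ∀ h : ![x, y, z] ∈ Tuples 3 T,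
      g x y z = c ⟨_, h⟩ :=
    ⟨fun x y z => if h : ![x, y, z] ∈ Tuples 3 T then c ⟨_, h⟩ else d, fun x y z h => dif_pos h⟩
  have hgX : ∀ X : Tuples 3 T, g (X.1 0) (X.1 1) (X.1 2) = c X := by
    intro X
    have he : ![X.1 0, X.1 1, X.1 2] = X.1 := by ext1 r; fin_cases r <;> rfl
    rw [hg _ _ _ (he ▸ X.2)]
    congr 1
    exact Subtype.ext he
  have hgloc : ∀ x ∈ P, ∀ y ∈ P, ∀ z ∈ P, clex x y → clex y z → ∃ M, ∀ x' ∈ P, ∀ y' ∈ P, ∀ z' ∈ P,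
      Agr M x x' → Agr M y y' → Agr M z z' →
        clex x' y' ∧ clex y' z' ∧ g x' y' z' = g x y z := by
    intro x hx y hy z hz hxy hyz
    obtain ⟨M, hM⟩ := hc ⟨_, mem_tuples_three (hPT hx) (hPT hy) (hPT hz) hxy hyz⟩
      (by intro r; fin_cases r <;> assumption)
    refine ⟨max M (max (splitLevel x y + 1) (splitLevel y z + 1)),
      fun x' hx' y' hy' z' hz' hxx' hyy' hzz' => ?_⟩
    have h1 := (clex.congr hxy (by omega) hxx' hyy').1
    have h2 := (clex.congr hyz (by omega) hyy' hzz').1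
    refine ⟨h1, h2, ?_⟩
    rw [hg _ _ _ (mem_tuples_three (hPT hx) (hPT hy) (hPT hz) hxy hyz),
      hg _ _ _ (mem_tuples_three (hPT hx') (hPT hy') (hPT hz') h1 h2)]
    refine hM _ (by intro r; fin_cases r <;> assumption) ?_
    intro r
    fin_cases r
    · exact hxx'.mono (le_max_left _ _)
    · exact hyy'.mono (le_max_left _ _)
    · exact hzz'.mono (le_max_left _ _)
  -- the colour of a triple as a function of its isolated point `x` and of its close points `y < z`
  obtain ⟨h, hh⟩ : ∃ h : Cantor → Cantor → Cantor → Fin l, ∀ x y z,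
      (clex x y → h x y z = g x y z) ∧ (¬ clex x y → h x y z = g y z x) :=
    ⟨fun x y z => if clex x y then g x y z else g y z x,
      fun x y z => ⟨fun h => if_pos h, fun h => if_neg h⟩⟩
  obtain ⟨P₂, hP₂P, hP₂, e, heloc, he⟩ := end_homogeneous hP h fun x hx y hy z hz hcl => by
    rcases hcl.lt_or_lt with ⟨h1, h2⟩ | ⟨h1, h2, h3⟩
    · obtain ⟨M, hM⟩ := hgloc x hx y hy z hz h1 h2
      refine ⟨M, fun x' hx' y' hy' z' hz' hxx' hyy' hzz' => ?_⟩
      obtain ⟨h1', -, h2'⟩ := hM x' hx' y' hy' z' hz' hxx' hyy' hzz'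
      rw [(hh x' y' z').1 h1', (hh x y z).1 h1, h2']
    · obtain ⟨M, hM⟩ := hgloc y hy z hz x hx h1 h2
      refine ⟨M, fun x' hx' y' hy' z' hz' hxx' hyy' hzz' => ?_⟩
      obtain ⟨h1', h3', h2'⟩ := hM y' hy' z' hz' x' hx' hyy' hzz' hxx'
      rw [(hh x' y' z').2 (clex_asymm (clex_trans h1' h3')), (hh x y z).2 h3, h2']
  obtain ⟨Q, hQP, hQ, ⟨v, w⟩, hvw⟩ := pairs hP₂ (fun x y => (e x y, e y x))
    fun x hx y hy hxy => by
      obtain ⟨M, hM⟩ := heloc x hx y hy hxy.1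
      obtain ⟨N, hN⟩ := heloc y hy x hx hxy.1.symm
      refine ⟨max M N, fun x' hx' y' hy' hxx' hyy' => ?_⟩
      exact Prod.ext
        (hM x' hx' y' hy' (hxx'.mono (le_max_left _ _)) (hyy'.mono (le_max_left _ _)))
        (hN y' hy' x' hx' (hyy'.mono (le_max_right _ _)) (hxx'.mono (le_max_right _ _)))
  refine ⟨Q, hQP.trans hP₂P, hQ, v, w, fun X hX => ?_⟩
  have h01 := X.2.2 0 1 (by decide)
  have h12 := X.2.2 1 2 (by decide)
  have h02 := X.2.2 0 2 (by decide)
  rw [← hgX X]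
  constructor
  · intro hlt
    rw [← (hh _ _ _).1 h01, he _ (hQP (hX 0)) _ (hQP (hX 1)) _ (hQP (hX 2)) ⟨h01.1, hlt, h12⟩]
    exact (Prod.ext_iff.mp (hvw _ (hX 0) _ (hX 1) h01)).1
  · intro hlt
    have hs : splitLevel (X.1 2) (X.1 0) = splitLevel (X.1 1) (X.1 2) := by
      rw [split_comm]
      exact (clex.congr h12 (Nat.lt_succ_self _)
        ((split_agr (X.1 0) (X.1 1)).symm.mono hlt) (Agr.refl _ _)).2
    rw [← (hh _ _ _).2 (clex_asymm h02),
      he _ (hQP (hX 2)) _ (hQP (hX 0)) _ (hQP (hX 1)) ⟨h02.1.symm, hs ▸ hlt, h01⟩]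
    exact (Prod.ext_iff.mp (hvw _ (hX 0) _ (hX 2) h02)).2

end

end Galvin

/-- **Galvin.** For `n ≤ 3`, `l ∈ ω` and a perfect `T ⊆ 2^ω`, every Baire measurable
coloring `c : [T]^n → l` is constant on `[P]^n_⪯` for some perfect `P ⊆ T`,
simultaneously for every total order `⪯` on `{1,…,n-1}`. -/
theorem galvin_theorem (n : ℕ) (hn : n ≤ 3) (l : ℕ) (T : Set Cantor) (hT : PerfectSet T)
    (c : ↥(Tuples n T) → Fin l) (hc : BaireMeasurableFun c) :
    ∃ P : Set Cantor, P ⊆ T ∧ PerfectSet P ∧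
      ∀ prec : Fin (n - 1) → Fin (n - 1) → Prop, IsLinearOrder (Fin (n - 1)) prec →
        ∃ v : Fin l, ∀ X : ↥(Tuples n T),
          (X : Fin n → Cantor) ∈ OrdTuples n prec P → c X = v := by
  obtain ⟨P, hPT, hP, hloc⟩ := Galvin.locally_constant (Galvin.perf_iff.mp hT) c hc
  match n, hn with
  | 0, _ =>
    refine ⟨T, subset_rfl, hT, fun prec _ => ?_⟩
    have h0 : (Fin.elim0 : Fin 0 → Cantor) ∈ Tuples 0 T := ⟨fun i => i.elim0, fun i => i.elim0⟩
    exact ⟨c ⟨_, h0⟩, fun X _ => congrArg c (Subtype.ext (Subsingleton.elim _ _))⟩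
  | 1, _ =>
    obtain ⟨Q, hQP, hQ, v, hv⟩ := Galvin.galvin_one hP hPT hloc
    exact ⟨Q, hQP.trans hPT, Galvin.perf_iff.mpr hQ, fun prec _ => ⟨v, fun X hX => hv X hX.1.1⟩⟩
  | 2, _ =>
    obtain ⟨Q, hQP, hQ, v, hv⟩ := Galvin.galvin_two hP hPT hloc
    exact ⟨Q, hQP.trans hPT, Galvin.perf_iff.mpr hQ, fun prec _ => ⟨v, fun X hX => hv X hX.1.1⟩⟩
  | 3, _ =>
    obtain ⟨Q, hQP, hQ, v, w, hvw⟩ := Galvin.galvin_three hP hPT hloc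
    refine ⟨Q, hQP.trans hPT, Galvin.perf_iff.mpr hQ, fun prec hprec => ?_⟩
    rcases hprec.toTotal.total (0 : Fin 2) (1 : Fin 2) with h | h
    · refine ⟨v, fun X hX => (hvw X hX.1.1).1 ?_⟩
      exact Galvin.cdist_lt_iff.mp ((hX.2 (0 : Fin 2) (1 : Fin 2) (by decide)).mpr h)
    · refine ⟨w, fun X hX => (hvw X hX.1.1).2 ?_⟩
      exact Galvin.cdist_lt_iff.mp ((hX.2 (1 : Fin 2) (0 : Fin 2) (by decide)).mpr h)
end
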